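/- arXiv:1412.4023 — 2 statements merged into one kernel-verified Lean document; each statement's English description precedes it below -/
import Mathlib

section
/- For every ε ∈ (0,1] and every Borel probability measure f₀ on 𝕋×ℝ with finite first moment ∫|v| df₀(x,v) < ∞, there exists a global weak solution of the Vlasov–Poisson system with massless electrons (VPME)_ε with initial datum f₀. -/
open MeasureTheory Real Filter Topology

noncomputable section

abbrev 𝕋 := AddCircle (1 : ℝ)

noncomputable def torusRep (x : 𝕋) : ℝ := (AddCircle.equivIco 1 0 x : ℝ)

/-- The 1-Wasserstein (Kantorovich–Rubinstein) distance via the dual formulation. -/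
noncomputable def W1 (μ ν : Measure (𝕋 × ℝ)) : ℝ :=
  sSup {r : ℝ | ∃ φ : 𝕋 × ℝ → ℝ, LipschitzWith 1 φ ∧
    r = (∫ p, φ p ∂μ) - ∫ p, φ p ∂ν}

/-- Test functions on 𝕋 × ℝ, represented as smooth functions on ℝ × ℝ that are
1-periodic in the first variable and compactly supported in the second. -/
def TestFun (φ : ℝ × ℝ → ℝ) : Prop :=
  ContDiff ℝ (⊤ : ℕ∞) φ ∧ (∀ q : ℝ × ℝ, φ (q.1 + 1, q.2) = φ q) ∧
    ∃ R : ℝ, ∀ q : ℝ × ℝ, R ≤ |q.2| → φ q = 0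

/-- The weak (distributional) formulation of the Vlasov equation
∂ₜ f + v ∂ₓ f + E ∂ᵥ f = 0 on the time interval `I`. -/
def VlasovWeak (I : Set ℝ) (f : ℝ → Measure (𝕋 × ℝ)) (E : ℝ → ℝ → ℝ) : Prop :=
  ∀ φ : ℝ × ℝ → ℝ, TestFun φ →
    (∀ t ∈ I, ∃ K : NNReal, ∃ δ : ℝ, 0 < δ ∧ LipschitzOnWith K
        (fun s => ∫ p : 𝕋 × ℝ, φ (torusRep p.1, p.2) ∂(f s)) (I ∩ Metric.ball t δ)) ∧
    (∀ᵐ t ∂(volume : Measure ℝ), t ∈ I → HasDerivWithinAt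
        (fun s => ∫ p : 𝕋 × ℝ, φ (torusRep p.1, p.2) ∂(f s))
        (∫ p : 𝕋 × ℝ,
          (p.2 * fderiv ℝ φ (torusRep p.1, p.2) (1, 0)
            + E t (torusRep p.1) * fderiv ℝ φ (torusRep p.1, p.2) (0, 1)) ∂(f t)) I t)

/-- A weak solution of the (VPME)_ε system on the time interval `I`, with electric
potential `U` and electric field `E` (given as 1-periodic functions on ℝ). -/
structure IsVPMESol (ε : ℝ) (I : Set ℝ) (f : ℝ → Measure (𝕋 × ℝ))
    (U E : ℝ → ℝ → ℝ) : Prop where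
  prob : ∀ t ∈ I, IsProbabilityMeasure (f t)
  moment : ∀ t ∈ I, Integrable (fun p : 𝕋 × ℝ => |p.2|) (f t)
  weakCont : ∀ φ : BoundedContinuousFunction (𝕋 × ℝ) ℝ,
      ContinuousOn (fun t => ∫ p, φ p ∂(f t)) I
  U_per : ∀ t ∈ I, Function.Periodic (U t) 1
  U_lip : ∀ t ∈ I, ∃ K : NNReal, LipschitzWith K (U t)
  E_per : ∀ t ∈ I, Function.Periodic (E t) 1
  poisson : ∀ t ∈ I, ∀ ψ : ℝ → ℝ, ContDiff ℝ (⊤ : ℕ∞) ψ → Function.Periodic ψ 1 →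
      ε ^ 2 * ∫ x in Set.Ico (0:ℝ) 1, U t x * deriv (deriv ψ) x
        = (∫ x in Set.Ico (0:ℝ) 1, Real.exp (U t x) * ψ x)
          - ∫ p : 𝕋 × ℝ, ψ (torusRep p.1) ∂(f t)
  E_def : ∀ t ∈ I, ∀ x : ℝ,
      Tendsto (fun h : ℝ => (U t (x + h) - U t (x - h)) / (2 * h)) (𝓝[>] 0)
        (𝓝 (-(E t x)))
  vlasov : VlasovWeak I f E

/-! ### Torus preliminaries -/

lemma torusRep_coe (x : ℝ) : torusRep (x : 𝕋) = Int.fract x := by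
  simp [torusRep, AddCircle.coe_equivIco_mk_apply]

lemma torusRep_mem (x : 𝕋) : torusRep x ∈ Set.Ico (0:ℝ) 1 := by
  have := (AddCircle.equivIco (1:ℝ) 0 x).2
  simpa [torusRep] using this

lemma coe_torusRep (x : 𝕋) : ((torusRep x : ℝ) : 𝕋) = x := AddCircle.coe_equivIco

lemma continuousAt_torusRep {x : 𝕋} (hx : x ≠ 0) : ContinuousAt torusRep x := by
  have h := AddCircle.continuousAt_equivIco (1:ℝ) 0 (x := x) (by simpa using hx)
  exact continuous_subtype_val.continuousAt.comp h

lemma periodic_torusRep {β : Type*} {g : ℝ → β} (hg : Function.Periodic g 1) (x : ℝ) :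
    g (torusRep (x : 𝕋)) = g x := by
  rw [torusRep_coe]
  have := hg.sub_zsmul_eq ⌊x⌋ (x := x)
  rw [zsmul_eq_mul, mul_one] at this
  exact this

instance : IsProbabilityMeasure (volume : Measure 𝕋) := ⟨by simp [AddCircle.measure_univ]⟩

lemma torus_norm_le (x : 𝕋) : ‖x‖ ≤ 1/2 := by
  have := AddCircle.norm_le_half_period (1:ℝ) (x := x) one_ne_zero
  simpa using this

lemma torus_norm_coe_le (x : ℝ) : ‖(x:𝕋)‖ ≤ |x| := by
  rw [UnitAddCircle.norm_eq]
  have := round_le x 0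
  simpa using this

lemma torus_norm_coe_eq {x : ℝ} (h : |x| ≤ 1/2) : ‖(x:𝕋)‖ = |x| := by
  rw [AddCircle.norm_coe_eq_abs_iff (1:ℝ) one_ne_zero]; simpa using h

lemma integral_torus_eq (F : 𝕋 → ℝ) : ∫ x in Set.Ico (0:ℝ) 1, F (x:𝕋) = ∫ x, F x := by
  have := UnitAddCircle.integral_preimage 0 F
  rw [zero_add] at this
  rw [integral_Ico_eq_integral_Ioc]
  exact this

/-! ### The kernel -/

def kK (a : ℝ) (x : 𝕋) : ℝ := cosh (a * (‖x‖ - 1/2)) / (4 * sinh (a/2))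

def kκ (a : ℝ) (x : 𝕋) : ℝ :=
  if x = 0 then 0 else -(a * sinh (a * (torusRep x - 1/2)) / (4 * sinh (a/2)))

lemma hasDerivAt_lin (a x : ℝ) : HasDerivAt (fun u : ℝ => a * (u - 1/2)) a x := by
  have := ((hasDerivAt_id' x).sub_const (1/2)).const_mul a
  rwa [mul_one] at this

lemma sinh_half_pos {a : ℝ} (ha : 2 ≤ a) : 0 < sinh (a/2) := by
  rw [sinh_pos_iff]; linarith

lemma kK_coe (a : ℝ) {r : ℝ} (hr : r ∈ Set.Icc (0:ℝ) 1) :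
    kK a (r:𝕋) = cosh (a * (r - 1/2)) / (4 * sinh (a/2)) := by
  unfold kK
  rcases le_total r (1/2) with h | h
  · rw [torus_norm_coe_eq (by rw [abs_of_nonneg hr.1]; exact h), abs_of_nonneg hr.1]
  · have h1 : (r : 𝕋) = ((r - 1 : ℝ) : 𝕋) := by
      rw [AddCircle.coe_sub, AddCircle.coe_period, sub_zero]
    rw [h1, torus_norm_coe_eq, abs_of_nonpos (by linarith [hr.2])]
    · congr 1
      rw [← cosh_neg]; congr 1; ring
    · rw [abs_of_nonpos (by linarith [hr.2])]; linarith

lemma kK_ge {a : ℝ} (ha : 2 ≤ a) (x : 𝕋) : 1 / (4 * sinh (a/2)) ≤ kK a x := by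
  have := sinh_half_pos ha
  unfold kK
  gcongr
  exact one_le_cosh _

lemma cosh_le_two_sinh {b : ℝ} (hb : 1 ≤ b) : cosh b ≤ 2 * sinh b := by
  have h1 : exp (-b) ≤ 1/2 := by
    have : exp (-b) ≤ exp (-1) := by gcongr
    have h2 := Real.exp_one_gt_d9
    rw [Real.exp_neg 1] at this
    have : (exp 1)⁻¹ ≤ 2⁻¹ := by gcongr; linarith
    linarith
  have h3 : (2:ℝ) ≤ exp b := by
    have h2 := Real.exp_one_gt_d9
    have : exp 1 ≤ exp b := by gcongr
    linarith
  rw [cosh_eq, sinh_eq]; linarith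

lemma kK_le {a : ℝ} (ha : 2 ≤ a) (x : 𝕋) : kK a x ≤ 1 := by
  have := sinh_half_pos ha
  unfold kK
  rw [div_le_one (by positivity)]
  have h1 : cosh (a * (‖x‖ - 1/2)) ≤ cosh (a/2) := by
    rw [cosh_le_cosh, abs_mul, abs_of_nonneg (by linarith : (0:ℝ) ≤ a), abs_of_nonneg (by linarith : (0:ℝ) ≤ a/2)]
    have : |‖x‖ - 1/2| ≤ 1/2 := by
      rw [abs_le]; constructor <;> linarith [torus_norm_le x, norm_nonneg x]
    nlinarith
  have := cosh_le_two_sinh (b := a/2) (by linarith)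
  linarith

lemma kK_pos {a : ℝ} (ha : 2 ≤ a) (x : 𝕋) : 0 < kK a x := by
  have := sinh_half_pos ha
  exact lt_of_lt_of_le (by positivity) (kK_ge ha x)

lemma kK_neg (a : ℝ) (x : 𝕋) : kK a (-x) = kK a x := by simp [kK]

lemma kK_lip {a : ℝ} (ha : 2 ≤ a) (x y : 𝕋) : |kK a x - kK a y| ≤ a/4 * ‖x - y‖ := by
  have hs := sinh_half_pos ha
  have key : ∀ u ∈ Set.Icc (0:ℝ) (1/2), ∀ w ∈ Set.Icc (0:ℝ) (1/2),
      |cosh (a * (u - 1/2)) / (4 * sinh (a/2)) - cosh (a * (w - 1/2)) / (4 * sinh (a/2))| ≤ a/4 * |u - w| := by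
    intro u hu w hw
    have := (convex_Icc (0:ℝ) (1/2)).norm_image_sub_le_of_norm_hasDerivWithin_le
      (f := fun u => cosh (a * (u - 1/2)) / (4 * sinh (a/2)))
      (f' := fun u => sinh (a * (u - 1/2)) * a / (4 * sinh (a/2))) (C := a/4) ?_ ?_ hw hu
    · simpa [Real.norm_eq_abs] using this
    · intro x hx
      have h1 : HasDerivAt (fun u : ℝ => a * (u - 1/2)) a x := hasDerivAt_lin a x
      exact ((h1.cosh).div_const _).hasDerivWithinAt
    · intro x hx
      have hm : |sinh (a * (x - 1/2))| ≤ sinh (a/2) := by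
        rw [abs_sinh, sinh_le_sinh, abs_mul, abs_of_nonneg (by linarith : (0:ℝ) ≤ a)]
        have : |x - 1/2| ≤ 1/2 := by
          rw [abs_le]; constructor <;> linarith [hx.1, hx.2]
        nlinarith
      rw [Real.norm_eq_abs, abs_div, abs_mul, abs_of_nonneg (by linarith : (0:ℝ) ≤ a),
        abs_of_pos (by positivity : 0 < 4 * sinh (a/2)), div_le_iff₀ (by positivity)]
      nlinarith
  have h2 := key ‖x‖ ⟨norm_nonneg _, torus_norm_le x⟩ ‖y‖ ⟨norm_nonneg _, torus_norm_le y⟩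
  refine h2.trans ?_
  gcongr
  exact abs_norm_sub_norm_le x y

lemma kK_cont (a : ℝ) : Continuous (kK a) := by
  unfold kK; fun_prop

lemma tendsto_symm_of_hasDerivAt {g : ℝ → ℝ} {g' x : ℝ} (h : HasDerivAt g g' x) :
    Tendsto (fun h : ℝ => (g (x + h) - g (x - h)) / (2 * h)) (𝓝[>] 0) (𝓝 g') := by
  have h1 : HasDerivAt (fun t => g (x + t)) g' 0 := by
    have : HasDerivAt g g' (x + 0) := by simpa using h
    simpa using this.comp_const_add x 0
  have h2 : HasDerivAt (fun t => g (x - t)) (-g') 0 := by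
    have : HasDerivAt g g' (x - 0) := by simpa using h
    simpa using this.comp_const_sub x 0
  have h3 := (h1.sub h2).tendsto_slope_zero_right
  have h4 := h3.const_mul (1/2)
  have e : (1/2:ℝ) * (g' - -g') = g' := by ring
  rw [e] at h4
  refine h4.congr fun t => ?_
  simp
  ring

lemma kK_symm_deriv (a : ℝ) (x : ℝ) :
    Tendsto (fun h : ℝ => (kK a ((x + h : ℝ) : 𝕋) - kK a ((x - h : ℝ) : 𝕋)) / (2 * h)) (𝓝[>] 0)
      (𝓝 (-(kκ a (x:𝕋)))) := by
  by_cases hx : (x : 𝕋) = 0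
  · have : ∀ h : ℝ, kK a ((x + h : ℝ) : 𝕋) - kK a ((x - h : ℝ) : 𝕋) = 0 := by
      intro h
      rw [AddCircle.coe_add, AddCircle.coe_sub, hx, zero_add, zero_sub, kK_neg, sub_self]
    simp only [this, zero_div, kκ, hx, if_true, neg_zero]
    exact tendsto_const_nhds
  · set r := torusRep (x:𝕋) with hr
    have hxr : (x : 𝕋) = (r : 𝕋) := (coe_torusRep _).symm
    have hr0 : r ∈ Set.Ioo (0:ℝ) 1 := by
      have := torusRep_mem (x:𝕋)
      refine ⟨lt_of_le_of_ne this.1 ?_, this.2⟩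
      intro h0
      apply hx; rw [hxr, ← h0]; simp
    have hd : HasDerivAt (fun s : ℝ => kK a (s:𝕋)) (-(kκ a (x:𝕋))) r := by
      have h1 : HasDerivAt (fun u : ℝ => a * (u - 1/2)) a r := hasDerivAt_lin a r
      have h2 := (h1.cosh).div_const (4 * sinh (a/2))
      have h3 : -(kκ a (x:𝕋)) = sinh (a * (r - 1/2)) * a / (4 * sinh (a/2)) := by
        simp only [kκ, hx, if_false, ← hr]; ring
      rw [h3]
      refine h2.congr_of_eventuallyEq ?_
      filter_upwards [Ioo_mem_nhds hr0.1 hr0.2] with s hs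
      exact kK_coe a ⟨hs.1.le, hs.2.le⟩
    have := tendsto_symm_of_hasDerivAt hd
    refine this.congr fun h => ?_
    simp only [AddCircle.coe_add, AddCircle.coe_sub, hxr]

lemma kκ_neg (a : ℝ) (z : 𝕋) : kκ a (-z) = - kκ a z := by
  obtain ⟨x, rfl⟩ := QuotientAddGroup.mk_surjective z
  change kκ a (-(x:𝕋)) = - kκ a (x:𝕋)
  have h1 := kK_symm_deriv a x
  have h2 := kK_symm_deriv a (-x)
  have h3 := h1.neg
  rw [neg_neg] at h3
  have h4 : Tendsto (fun h : ℝ => (kK a ((-x + h : ℝ) : 𝕋) - kK a ((-x - h : ℝ) : 𝕋)) / (2 * h))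
      (𝓝[>] 0) (𝓝 (kκ a (x:𝕋))) := by
    refine h3.congr fun h => ?_
    have e1 : ((-x + h : ℝ) : 𝕋) = -((x - h : ℝ) : 𝕋) := by
      rw [← AddCircle.coe_neg]; congr 1; ring
    have e2 : ((-x - h : ℝ) : 𝕋) = -((x + h : ℝ) : 𝕋) := by
      rw [← AddCircle.coe_neg]; congr 1; ring
    rw [e1, e2, kK_neg, kK_neg]; ring
  have := tendsto_nhds_unique h2 h4
  rw [AddCircle.coe_neg] at this
  linarith

lemma kK_quot_bound {a : ℝ} (ha : 2 ≤ a) (z : 𝕋) {h : ℝ} (hh : 0 < h) :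
    |(kK a (z + (h : 𝕋)) - kK a (z - (h : 𝕋))) / (2 * h)| ≤ a/4 := by
  rw [abs_div, abs_of_pos (by positivity : 0 < 2 * h), div_le_iff₀ (by positivity)]
  refine (kK_lip ha _ _).trans ?_
  gcongr
  have : z + (h:𝕋) - (z - (h:𝕋)) = ((2 * h : ℝ) : 𝕋) := by
    rw [two_mul, AddCircle.coe_add]; abel
  rw [this]
  refine (torus_norm_coe_le _).trans ?_
  rw [abs_of_pos (by positivity)]

lemma kK_symm_deriv' (a : ℝ) (z : 𝕋) :
    Tendsto (fun h : ℝ => (kK a (z + (h : 𝕋)) - kK a (z - (h : 𝕋))) / (2 * h)) (𝓝[>] 0)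
      (𝓝 (-(kκ a z))) := by
  obtain ⟨x, rfl⟩ := QuotientAddGroup.mk_surjective z
  exact kK_symm_deriv a x

lemma kκ_bound {a : ℝ} (ha : 2 ≤ a) (z : 𝕋) : |kκ a z| ≤ a/4 := by
  have h := (kK_symm_deriv' a z).abs
  rw [abs_neg] at h
  refine le_of_tendsto h ?_
  filter_upwards [self_mem_nhdsWithin] with t ht
  exact kK_quot_bound ha z ht

lemma seq_tendsto_right : Tendsto (fun n : ℕ => (1 : ℝ) / (n + 1)) atTop (𝓝[>] 0) := by
  rw [tendsto_nhdsWithin_iff]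
  refine ⟨tendsto_one_div_add_atTop_nhds_zero_nat, Eventually.of_forall fun n => ?_⟩
  simp only [Set.mem_Ioi]; positivity

lemma kκ_meas (a : ℝ) : Measurable (kκ a) := by
  have h : Measurable (fun z => -(kκ a z)) := by
    refine measurable_of_tendsto_metrizable (f := fun (n : ℕ) (z : 𝕋) =>
      (kK a (z + ((1 / ((n:ℝ) + 1) : ℝ) : 𝕋)) - kK a (z - ((1 / ((n:ℝ) + 1) : ℝ) : 𝕋))) / (2 * (1 / ((n:ℝ) + 1)))) ?_ ?_
    · intro n
      have := kK_cont a
      apply Continuous.measurable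
      fun_prop
    · rw [tendsto_pi_nhds]
      intro z
      exact (kK_symm_deriv' a z).comp seq_tendsto_right
  have h2 := h.neg
  simpa only [neg_neg, Pi.neg_def] using h2

lemma kκ_contAt (a : ℝ) {z : 𝕋} (hz : z ≠ 0) : ContinuousAt (kκ a) z := by
  have h1 := continuousAt_torusRep hz
  have h2 : ContinuousAt (fun x => -(a * sinh (a * (torusRep x - 1/2)) / (4 * sinh (a/2)))) z := by
    have : Continuous (fun r : ℝ => -(a * sinh (a * (r - 1/2)) / (4 * sinh (a/2)))) := by fun_prop
    exact this.continuousAt.comp h1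
  refine h2.congr ?_
  filter_upwards [isOpen_ne.mem_nhds hz] with x hx
  simp only [kκ, if_neg hx]

lemma kκ_zero (a : ℝ) : kκ a 0 = 0 := by simp [kκ]

/-- weak form of the Green function identity -/
lemma kK_weak {a : ℝ} (ha : 2 ≤ a) {θ : ℝ → ℝ} (hθ : ContDiff ℝ (⊤ : ℕ∞) θ)
    (hp : Function.Periodic θ 1) :
    ∫ x in (0:ℝ)..1, kK a (x:𝕋) * (-(2/a) * deriv (deriv θ) x + 2 * a * θ x) = θ 0 := by
  have hs := sinh_half_pos ha
  have hθ' : ContDiff ℝ (⊤ : ℕ∞) (deriv θ) := by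
    apply ContDiff.deriv'
    exact hθ
  have hθ'' : Continuous (deriv (deriv θ)) := hθ'.continuous_deriv (by simp)
  have hd1 : ∀ x, HasDerivAt θ (deriv θ x) x := fun x =>
    (hθ.differentiable (by simp)).differentiableAt.hasDerivAt
  have hd2 : ∀ x, HasDerivAt (deriv θ) (deriv (deriv θ) x) x := fun x =>
    (hθ'.differentiable (by simp)).differentiableAt.hasDerivAt
  have hp' : deriv θ 1 = deriv θ 0 := by
    have h : (fun x => θ (x + 1)) = θ := funext hp
    have := deriv_comp_add_const θ 1 0
    rw [h, zero_add] at this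
    exact this.symm
  have hp0 : θ 1 = θ 0 := by simpa using hp 0
  have e1 : ∫ x in (0:ℝ)..1, kK a (x:𝕋) * (-(2/a) * deriv (deriv θ) x + 2 * a * θ x)
      = ∫ x in (0:ℝ)..1, cosh (a * (x - 1/2)) / (4 * sinh (a/2)) * (-(2/a) * deriv (deriv θ) x + 2 * a * θ x) := by
    apply intervalIntegral.integral_congr
    intro x hx
    rw [Set.uIcc_of_le zero_le_one] at hx
    simp only [kK_coe a hx]
  rw [e1]
  have key := intervalIntegral.integral_eq_sub_of_hasDerivAt (a := 0) (b := 1)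
    (f := fun x => (4 * sinh (a/2))⁻¹ * (-(2/a)) * (cosh (a * (x - 1/2)) * deriv θ x - a * sinh (a * (x - 1/2)) * θ x))
    (f' := fun x => cosh (a * (x - 1/2)) / (4 * sinh (a/2)) * (-(2/a) * deriv (deriv θ) x + 2 * a * θ x)) ?_ ?_
  · rw [key, hp', hp0]
    have e2 : a * (1 - 1/2) = a/2 := by ring
    have e3 : a * (0 - 1/2) = -(a/2) := by ring
    rw [e2, e3, cosh_neg, sinh_neg]
    field_simp
    ring
  · intro x _
    have h1 : HasDerivAt (fun u : ℝ => a * (u - 1/2)) a x := hasDerivAt_lin a x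
    have h2 := ((h1.cosh.mul (hd2 x)).sub ((h1.sinh.const_mul a).mul (hd1 x))).const_mul
      ((4 * sinh (a/2))⁻¹ * (-(2/a)))
    refine h2.congr_deriv ?_
    field_simp
    ring
  · apply Continuous.intervalIntegrable
    have := hθ.continuous
    fun_prop

/-! ### The elliptic equation -/

abbrev PM := ProbabilityMeasure (𝕋 × ℝ)

lemma integrable_of_bdd {α : Type*} [MeasurableSpace α] {μ : Measure α} [IsFiniteMeasure μ]
    {g : α → ℝ} (hg : Measurable g) (C : ℝ) (hC : ∀ x, |g x| ≤ C) : Integrable g μ :=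
  Integrable.of_bound hg.aestronglyMeasurable C (Eventually.of_forall hC)

lemma integral_abs_le_of_bdd {α : Type*} [MeasurableSpace α] {μ : Measure α} [IsProbabilityMeasure μ]
    {g : α → ℝ} (C : ℝ) (hC : ∀ x, |g x| ≤ C) : |∫ x, g x ∂μ| ≤ C := by
  have := norm_integral_le_of_norm_le_const (μ := μ) (f := g) (C := C) (Eventually.of_forall hC)
  simpa using this

lemma cmap_bdd (g : C(𝕋, ℝ)) (x : 𝕋) : |g x| ≤ ‖g‖ := g.norm_coe_le_norm x

lemma kK_abs {a : ℝ} (ha : 2 ≤ a) (x : 𝕋) : |kK a x| ≤ 1 := by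
  rw [abs_of_pos (kK_pos ha x)]; exact kK_le ha x

lemma kK_integral {a : ℝ} (ha : 2 ≤ a) (x : 𝕋) : ∫ y, kK a (x - y) = 1 / (2 * a) := by
  rw [integral_sub_left_eq_self (kK a) volume x]
  have h := kK_weak ha (θ := fun _ => 1) contDiff_const (fun _ => rfl)
  have h2 := UnitAddCircle.intervalIntegral_preimage 0 (kK a)
  rw [zero_add] at h2
  simp only [deriv_const', deriv_const, mul_zero, zero_add, mul_one] at h
  rw [intervalIntegral.integral_mul_const] at h
  have h2' : ∫ (x : ℝ) in (0:ℝ)..1, kK a (x:𝕋) = ∫ b : 𝕋, kK a b := h2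
  rw [h2'] at h
  field_simp
  linarith

lemma kKmul_integrable {a : ℝ} (ha : 2 ≤ a) (x : 𝕋) (g : C(𝕋, ℝ)) :
    Integrable (fun y => kK a (x - y) * g y) volume := by
  have h1 := kK_cont a
  have h2 := g.continuous
  refine integrable_of_bdd (by apply Continuous.measurable; fun_prop) (1 * ‖g‖) fun y => ?_
  rw [abs_mul]
  gcongr
  · exact kK_abs ha _
  · exact cmap_bdd g y

/-- functions with a Lipschitz bound on the torus are continuous -/
lemma cont_of_lip {F : 𝕋 → ℝ} (C : ℝ) (h : ∀ x y, |F x - F y| ≤ C * ‖x - y‖) : Continuous F := by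
  have : LipschitzWith (Real.toNNReal C) F := by
    apply LipschitzWith.of_dist_le_mul
    intro x y
    rw [Real.dist_eq, dist_eq_norm]
    refine (h x y).trans ?_
    gcongr
    exact Real.le_coe_toNNReal C
  exact this.continuous

lemma convK_lip {a : ℝ} (ha : 2 ≤ a) (g : C(𝕋, ℝ)) (x x' : 𝕋) :
    |(∫ y, kK a (x - y) * g y) - ∫ y, kK a (x' - y) * g y| ≤ (a/4 * ‖g‖) * ‖x - x'‖ := by
  rw [← integral_sub (kKmul_integrable ha x g) (kKmul_integrable ha x' g)]
  refine integral_abs_le_of_bdd _ fun y => ?_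
  rw [← sub_mul, abs_mul]
  have h1 := kK_lip ha (x - y) (x' - y)
  rw [sub_sub_sub_cancel_right] at h1
  calc _ ≤ (a/4 * ‖x - x'‖) * ‖g‖ := by
        gcongr
        exact cmap_bdd g y
    _ = _ := by ring

lemma kKmu_integrable {a : ℝ} (ha : 2 ≤ a) (x : 𝕋) (μ : PM) :
    Integrable (fun p : 𝕋 × ℝ => kK a (x - p.1)) (μ : Measure (𝕋 × ℝ)) := by
  have h1 := kK_cont a
  exact integrable_of_bdd (by apply Continuous.measurable; fun_prop) 1 fun y => kK_abs ha _

lemma wof_lip {a : ℝ} (ha : 2 ≤ a) (μ : PM) (x x' : 𝕋) :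
    |(∫ p : 𝕋 × ℝ, kK a (x - p.1) ∂(μ : Measure (𝕋 × ℝ))) - ∫ p : 𝕋 × ℝ, kK a (x' - p.1) ∂(μ : Measure (𝕋 × ℝ))|
      ≤ (a/4) * ‖x - x'‖ := by
  rw [← integral_sub (kKmu_integrable ha x μ) (kKmu_integrable ha x' μ)]
  refine integral_abs_le_of_bdd _ fun y => ?_
  have h1 := kK_lip ha (x - y.1) (x' - y.1)
  rwa [sub_sub_sub_cancel_right] at h1

def convK {a : ℝ} (ha : 2 ≤ a) (g : C(𝕋, ℝ)) : C(𝕋, ℝ) :=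
  ⟨fun x => ∫ y, kK a (x - y) * g y, cont_of_lip _ (convK_lip ha g)⟩

def wof {a : ℝ} (ha : 2 ≤ a) (μ : PM) : C(𝕋, ℝ) :=
  ⟨fun x => ∫ p : 𝕋 × ℝ, kK a (x - p.1) ∂(μ : Measure (𝕋 × ℝ)), cont_of_lip _ (wof_lip ha μ)⟩

lemma convK_dist {a : ℝ} (ha : 2 ≤ a) (g g' : C(𝕋, ℝ)) :
    dist (convK ha g) (convK ha g') ≤ 1 / (2 * a) * dist g g' := by
  rw [ContinuousMap.dist_le (by positivity)]
  intro x
  rw [Real.dist_eq]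
  change |(∫ y, kK a (x - y) * g y) - ∫ y, kK a (x - y) * g' y| ≤ _
  rw [← integral_sub (kKmul_integrable ha x g) (kKmul_integrable ha x g')]
  have h1 : |∫ y, (kK a (x - y) * g y - kK a (x - y) * g' y)| ≤ ∫ y, kK a (x - y) * dist g g' := by
    refine norm_integral_le_of_norm_le (f := fun y => kK a (x - y) * g y - kK a (x - y) * g' y) ?_ ?_
    · refine Integrable.mul_const ?_ _
      have h1 := kK_cont a
      exact integrable_of_bdd (by apply Continuous.measurable; fun_prop) 1 fun y => kK_abs ha _
    · refine Eventually.of_forall fun y => ?_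
      rw [← mul_sub, norm_mul, Real.norm_eq_abs, Real.norm_eq_abs, abs_of_pos (kK_pos ha _)]
      have := kK_pos ha (x - y)
      gcongr
      exact ContinuousMap.dist_apply_le_dist (f := g) (g := g') y
  rwa [integral_mul_const, kK_integral ha] at h1

/-! truncated nonlinearity -/

def kmin (a : ℝ) : ℝ := 1 / (4 * sinh (a/2))
def cM (a : ℝ) : ℝ := log (2 * a)
def cm (a : ℝ) : ℝ := log (2 * a * kmin a)
def clampc (a u : ℝ) : ℝ := max (cm a) (min u (cM a))
def gfun (a c : ℝ) : ℝ := 2 * a * c - exp c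
def gt (a u : ℝ) : ℝ := gfun a (clampc a u)

lemma kmin_pos {a : ℝ} (ha : 2 ≤ a) : 0 < kmin a := by
  have := sinh_half_pos ha
  unfold kmin; positivity

lemma kmin_le {a : ℝ} (ha : 2 ≤ a) : kmin a ≤ 1 := (kK_ge ha 0).trans (kK_le ha 0)

lemma exp_cM {a : ℝ} (ha : 2 ≤ a) : exp (cM a) = 2 * a := by
  unfold cM; rw [exp_log]; linarith

lemma exp_cm {a : ℝ} (ha : 2 ≤ a) : exp (cm a) = 2 * a * kmin a := by
  have := kmin_pos ha
  unfold cm; rw [exp_log]; positivity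

lemma cm_le_cM {a : ℝ} (ha : 2 ≤ a) : cm a ≤ cM a := by
  rw [← exp_le_exp, exp_cm ha, exp_cM ha]
  have := kmin_le ha
  nlinarith

lemma clampc_mem {a : ℝ} (ha : 2 ≤ a) (u : ℝ) : clampc a u ∈ Set.Icc (cm a) (cM a) := by
  unfold clampc
  exact ⟨le_max_left _ _, max_le (cm_le_cM ha) (min_le_right _ _)⟩

lemma gfun_diff {a : ℝ} (ha : 2 ≤ a) {s u : ℝ} (hs : s ∈ Set.Icc (cm a) (cM a))
    (hu : u ∈ Set.Icc (cm a) (cM a)) (h : s ≤ u) :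
    0 ≤ gfun a u - gfun a s ∧ gfun a u - gfun a s ≤ (2 * a * (1 - kmin a)) * (u - s) := by
  have h1 : exp s * (u - s) ≤ exp u - exp s := by
    have := add_one_le_exp (u - s)
    have e : exp u = exp s * exp (u - s) := by rw [← exp_add]; ring_nf
    rw [e]; nlinarith [exp_pos s]
  have h2 : exp u - exp s ≤ exp u * (u - s) := by
    have := add_one_le_exp (s - u)
    have e : exp s = exp u * exp (s - u) := by rw [← exp_add]; ring_nf
    rw [e]; nlinarith [exp_pos u]
  have h3 : exp u ≤ 2 * a := by rw [← exp_cM ha]; exact exp_le_exp.2 hu.2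
  have h4 : 2 * a * kmin a ≤ exp s := by rw [← exp_cm ha]; exact exp_le_exp.2 hs.1
  unfold gfun
  constructor <;> nlinarith

lemma gt_lip {a : ℝ} (ha : 2 ≤ a) (u s : ℝ) : |gt a u - gt a s| ≤ (2 * a * (1 - kmin a)) * |u - s| := by
  have hk := kmin_le ha
  wlog h : s ≤ u generalizing u s
  · have := this s u (le_of_not_ge h)
    rwa [abs_sub_comm, abs_sub_comm u s]
  have hc : clampc a s ≤ clampc a u := by unfold clampc; gcongr
  have hc2 : clampc a u - clampc a s ≤ u - s := by
    unfold clampc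
    have := abs_max_sub_max_le_abs (min u (cM a)) (min s (cM a)) (cm a)
    have h2 := abs_min_sub_min_le_max u (cM a) s (cM a)
    rw [sub_self, abs_zero, max_eq_left (abs_nonneg _)] at h2
    rw [max_comm (cm a), max_comm (cm a)]
    have h3 := le_abs_self (max (min u (cM a)) (cm a) - max (min s (cM a)) (cm a))
    rw [abs_of_nonneg (sub_nonneg.2 h)] at h2
    linarith
  have := gfun_diff ha (clampc_mem ha s) (clampc_mem ha u) hc
  rw [abs_of_nonneg (sub_nonneg.2 h)]
  unfold gt
  rw [abs_of_nonneg this.1]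
  refine this.2.trans ?_
  have : 0 ≤ 1 - kmin a := by linarith
  gcongr

lemma gt_range {a : ℝ} (ha : 2 ≤ a) (u : ℝ) : gfun a (cm a) ≤ gt a u ∧ gt a u ≤ gfun a (cM a) := by
  have hm := clampc_mem ha u
  have h1 := gfun_diff ha ⟨le_rfl, cm_le_cM ha⟩ hm hm.1
  have h2 := gfun_diff ha hm ⟨cm_le_cM ha, le_rfl⟩ hm.2
  unfold gt
  constructor <;> linarith [h1.1, h2.1]

lemma gt_cont (a : ℝ) : Continuous (gt a) := by
  unfold gt gfun clampc; fun_prop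

def gtC (a : ℝ) (U : C(𝕋, ℝ)) : C(𝕋, ℝ) := ⟨fun x => gt a (U x), (gt_cont a).comp U.continuous⟩

lemma gtC_dist {a : ℝ} (ha : 2 ≤ a) (U V : C(𝕋, ℝ)) :
    dist (gtC a U) (gtC a V) ≤ (2 * a * (1 - kmin a)) * dist U V := by
  have hk : 0 ≤ 1 - kmin a := by linarith [kmin_le ha]
  rw [ContinuousMap.dist_le (by positivity)]
  intro x
  rw [Real.dist_eq]
  refine (gt_lip ha (U x) (V x)).trans ?_
  gcongr
  exact ContinuousMap.dist_apply_le_dist (f := U) (g := V) x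

def Tmap {a : ℝ} (ha : 2 ≤ a) (w U : C(𝕋, ℝ)) : C(𝕋, ℝ) := convK ha (gtC a U) + w

def ctr {a : ℝ} (ha : 2 ≤ a) : NNReal := ⟨1 - kmin a, by linarith [kmin_le ha]⟩

lemma ctr_coe {a : ℝ} (ha : 2 ≤ a) : (ctr ha : ℝ) = 1 - kmin a := rfl

lemma Tmap_contr {a : ℝ} (ha : 2 ≤ a) (w : C(𝕋, ℝ)) : ContractingWith (ctr ha) (Tmap ha w) := by
  constructor
  · rw [← NNReal.coe_lt_coe, ctr_coe]
    have := kmin_pos ha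
    simp only [NNReal.coe_one]; linarith
  · apply LipschitzWith.of_dist_le_mul
    intro U V
    unfold Tmap
    rw [dist_add_right]
    refine (convK_dist ha _ _).trans ?_
    rw [ctr_coe]
    calc _ ≤ 1 / (2 * a) * ((2 * a * (1 - kmin a)) * dist U V) := by
          gcongr; exact gtC_dist ha U V
      _ = _ := by field_simp

def solU {a : ℝ} (ha : 2 ≤ a) (w : C(𝕋, ℝ)) : C(𝕋, ℝ) :=
  ContractingWith.fixedPoint (Tmap ha w) (Tmap_contr ha w)

lemma solU_eq {a : ℝ} (ha : 2 ≤ a) (w : C(𝕋, ℝ)) :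
    convK ha (gtC a (solU ha w)) + w = solU ha w :=
  (Tmap_contr ha w).fixedPoint_isFixedPt

lemma solU_cont {a : ℝ} (ha : 2 ≤ a) : Continuous (solU ha) := by
  have hk := kmin_pos ha
  have : LipschitzWith (Real.toNNReal (1 / kmin a)) (solU ha) := by
    apply LipschitzWith.of_dist_le_mul
    intro w w'
    have := (Tmap_contr ha w).fixedPoint_lipschitz_in_map (Tmap_contr ha w') (C := dist w w') ?_
    · refine this.trans (le_of_eq ?_)
      rw [ctr_coe, Real.coe_toNNReal _ (by positivity)]
      rw [sub_sub_cancel, div_eq_inv_mul, one_div]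
    · intro z
      unfold Tmap
      rw [dist_add_left]
  exact this.continuous

def Uof {a : ℝ} (ha : 2 ≤ a) (μ : PM) : C(𝕋, ℝ) := solU ha (wof ha μ)
def hof {a : ℝ} (ha : 2 ≤ a) (μ : PM) : C(𝕋, ℝ) := gtC a (Uof ha μ)

lemma Uof_eq {a : ℝ} (ha : 2 ≤ a) (μ : PM) (x : 𝕋) :
    Uof ha μ x = (∫ y, kK a (x - y) * hof ha μ y) + ∫ p : 𝕋 × ℝ, kK a (x - p.1) ∂(μ : Measure (𝕋 × ℝ)) := by
  have := solU_eq ha (wof ha μ)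
  have h2 := congrArg (fun F : C(𝕋, ℝ) => F x) this
  exact h2.symm

lemma Uof_mem {a : ℝ} (ha : 2 ≤ a) (μ : PM) (x : 𝕋) : Uof ha μ x ∈ Set.Icc (cm a) (cM a) := by
  have h1 : kmin a ≤ ∫ p : 𝕋 × ℝ, kK a (x - p.1) ∂(μ : Measure (𝕋 × ℝ)) := by
    have := integral_mono (integrable_const (kmin a)) (kKmu_integrable ha x μ) (fun p => kK_ge ha (x - p.1))
    simpa using this
  have h2 : ∫ p : 𝕋 × ℝ, kK a (x - p.1) ∂(μ : Measure (𝕋 × ℝ)) ≤ 1 := by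
    have := integral_mono (kKmu_integrable ha x μ) (integrable_const 1) (fun p => kK_le ha (x - p.1))
    simpa using this
  have hKi : Integrable (fun y => kK a (x - y)) volume := by
    have h1 := kK_cont a
    exact integrable_of_bdd (by apply Continuous.measurable; fun_prop) 1 fun y => kK_abs ha _
  have h3 : 1 / (2 * a) * gfun a (cm a) ≤ ∫ y, kK a (x - y) * hof ha μ y := by
    rw [← kK_integral ha x, ← integral_mul_const]
    refine integral_mono (hKi.mul_const _) (kKmul_integrable ha x _) fun y => ?_
    have := kK_pos ha (x - y)
    exact mul_le_mul_of_nonneg_left (gt_range ha _).1 this.le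
  have h4 : ∫ y, kK a (x - y) * hof ha μ y ≤ 1 / (2 * a) * gfun a (cM a) := by
    rw [← kK_integral ha x, ← integral_mul_const]
    refine integral_mono (kKmul_integrable ha x _) (hKi.mul_const _) fun y => ?_
    have := kK_pos ha (x - y)
    exact mul_le_mul_of_nonneg_left (gt_range ha _).2 this.le
  have e1 : 1 / (2 * a) * gfun a (cm a) = cm a - kmin a := by
    unfold gfun; rw [exp_cm ha]; field_simp
  have e2 : 1 / (2 * a) * gfun a (cM a) = cM a - 1 := by
    unfold gfun; rw [exp_cM ha]; field_simp
  rw [Uof_eq ha μ x]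
  constructor <;> linarith

lemma hof_eq {a : ℝ} (ha : 2 ≤ a) (μ : PM) (x : 𝕋) :
    hof ha μ x = 2 * a * Uof ha μ x - exp (Uof ha μ x) := by
  have h := Uof_mem ha μ x
  change gt a (Uof ha μ x) = _
  unfold gt clampc
  rw [min_eq_left h.2, max_eq_right h.1]
  rfl

def Hb (a : ℝ) : ℝ := |gfun a (cm a)| + |gfun a (cM a)|

lemma hof_bdd {a : ℝ} (ha : 2 ≤ a) (μ : PM) (x : 𝕋) : |hof ha μ x| ≤ Hb a := by
  have h := gt_range ha (Uof ha μ x)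
  change |gt a (Uof ha μ x)| ≤ _
  unfold Hb
  rw [abs_le]
  constructor
  · linarith [neg_abs_le (gfun a (cm a)), abs_nonneg (gfun a (cM a))]
  · linarith [le_abs_self (gfun a (cM a)), abs_nonneg (gfun a (cm a))]

lemma Hb_nonneg (a : ℝ) : 0 ≤ Hb a := by unfold Hb; positivity

/-- integration against a bounded continuous function is continuous on `PM` -/
lemma cont_integral (g : 𝕋 × ℝ → ℝ) (hg : Continuous g) (C : ℝ) (hC : ∀ p, |g p| ≤ C) :
    Continuous fun μ : PM => ∫ p, g p ∂(μ : Measure (𝕋 × ℝ)) := by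
  have := ProbabilityMeasure.continuous_integral_boundedContinuousFunction (X := 𝕋 × ℝ)
    (f := BoundedContinuousFunction.ofNormedAddCommGroup g hg C hC)
  exact this

lemma wof_cont {a : ℝ} (ha : 2 ≤ a) : Continuous (wof ha) := by
  have hj : Continuous (fun q : PM × 𝕋 => ∫ p : 𝕋 × ℝ, kK a (q.2 - p.1) ∂(q.1 : Measure (𝕋 × ℝ))) := by
    rw [continuous_iff_continuousAt]
    rintro ⟨μ₀, x₀⟩
    have hk := kK_cont a
    have c1 : Continuous fun μ : PM => ∫ p : 𝕋 × ℝ, kK a (x₀ - p.1) ∂(μ : Measure (𝕋 × ℝ)) :=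
      cont_integral (fun p => kK a (x₀ - p.1)) (by fun_prop) 1 (fun p => kK_abs ha _)
    have t1 : Tendsto (fun q : PM × 𝕋 => ∫ p : 𝕋 × ℝ, kK a (x₀ - p.1) ∂(q.1 : Measure (𝕋 × ℝ)))
        (𝓝 (μ₀, x₀)) (𝓝 (∫ p : 𝕋 × ℝ, kK a (x₀ - p.1) ∂(μ₀ : Measure (𝕋 × ℝ)))) :=
      (c1.comp continuous_fst).tendsto (μ₀, x₀)
    have t2 : Tendsto (fun q : PM × 𝕋 => (a/4) * ‖q.2 - x₀‖) (𝓝 (μ₀, x₀)) (𝓝 0) := by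
      have : Continuous (fun q : PM × 𝕋 => (a/4) * ‖q.2 - x₀‖) := by fun_prop
      have := this.tendsto (μ₀, x₀)
      simpa using this
    have t3 : Tendsto (fun q : PM × 𝕋 => (∫ p : 𝕋 × ℝ, kK a (q.2 - p.1) ∂(q.1 : Measure (𝕋 × ℝ)))
        - ∫ p : 𝕋 × ℝ, kK a (x₀ - p.1) ∂(q.1 : Measure (𝕋 × ℝ))) (𝓝 (μ₀, x₀)) (𝓝 0) :=
      squeeze_zero_norm (fun q => wof_lip ha q.1 q.2 x₀) t2
    have := t3.add t1
    simpa [ContinuousAt] using this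
  exact (ContinuousMap.curry ⟨_, hj⟩).continuous

lemma Uof_cont {a : ℝ} (ha : 2 ≤ a) : Continuous (Uof ha) := (solU_cont ha).comp (wof_cont ha)

lemma hof_cont {a : ℝ} (ha : 2 ≤ a) : Continuous (hof ha) := by
  have : Continuous (gtC a) := by
    have hk : 0 ≤ 1 - kmin a := by linarith [kmin_le ha]
    have : LipschitzWith (Real.toNNReal (2 * a * (1 - kmin a))) (gtC a) := by
      apply LipschitzWith.of_dist_le_mul
      intro U V
      rw [Real.coe_toNNReal _ (by positivity)]
      exact gtC_dist ha U V
    exact this.continuous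
  exact this.comp (Uof_cont ha)

/-! the field -/

def E1 {a : ℝ} (ha : 2 ≤ a) (μ : PM) (x : 𝕋) : ℝ := ∫ y, kκ a (x - y) * hof ha μ y
def E2 (a : ℝ) (μ : PM) (x : 𝕋) : ℝ := ∫ p : 𝕋 × ℝ, kκ a (x - p.1) ∂(μ : Measure (𝕋 × ℝ))
def Ef {a : ℝ} (ha : 2 ≤ a) (μ : PM) (x : 𝕋) : ℝ := E1 ha μ x + E2 a μ x

def CE (a : ℝ) : ℝ := a/4 * Hb a + a/4

lemma CE_nonneg {a : ℝ} (ha : 2 ≤ a) : 0 ≤ CE a := by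
  have := Hb_nonneg a
  unfold CE; positivity

lemma kκmul_bdd {a : ℝ} (ha : 2 ≤ a) (μ : PM) (x y : 𝕋) : |kκ a (x) * hof ha μ y| ≤ a/4 * Hb a := by
  rw [abs_mul]
  gcongr
  · exact kκ_bound ha _
  · exact hof_bdd ha μ y

lemma kκmul_meas {a : ℝ} (ha : 2 ≤ a) (μ : PM) (x : 𝕋) : Measurable fun y => kκ a (x - y) * hof ha μ y := by
  have h1 := kκ_meas a
  have h2 := (hof ha μ).continuous.measurable
  fun_prop

lemma E1_bdd {a : ℝ} (ha : 2 ≤ a) (μ : PM) (x : 𝕋) : |E1 ha μ x| ≤ a/4 * Hb a :=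
  integral_abs_le_of_bdd _ fun y => kκmul_bdd ha μ _ y

lemma E2_bdd {a : ℝ} (ha : 2 ≤ a) (μ : PM) (x : 𝕋) : |E2 a μ x| ≤ a/4 :=
  integral_abs_le_of_bdd _ fun y => kκ_bound ha _

lemma Ef_bdd {a : ℝ} (ha : 2 ≤ a) (μ : PM) (x : 𝕋) : |Ef ha μ x| ≤ CE a := by
  unfold Ef CE
  exact (abs_add_le _ _).trans (add_le_add (E1_bdd ha μ x) (E2_bdd ha μ x))

lemma E1_eq {a : ℝ} (ha : 2 ≤ a) (μ : PM) (x : 𝕋) : E1 ha μ x = ∫ y, kκ a y * hof ha μ (x - y) := by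
  unfold E1
  have := integral_sub_left_eq_self (fun y => kκ a y * hof ha μ (x - y)) volume x
  rw [← this]
  simp

lemma E1_cont {a : ℝ} (ha : 2 ≤ a) (μ : PM) : Continuous (E1 ha μ) := by
  have : E1 ha μ = fun x => ∫ y, kκ a y * hof ha μ (x - y) := funext (E1_eq ha μ)
  rw [this]
  have h1 := kκ_meas a
  have h2 := (hof ha μ).continuous
  refine continuous_of_dominated (bound := fun _ => a/4 * Hb a) ?_ ?_ (integrable_const _) ?_
  · intro x
    have : Measurable fun y => hof ha μ (x - y) := by apply Continuous.measurable; fun_prop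
    exact (h1.mul this).aestronglyMeasurable
  · intro x
    exact Eventually.of_forall fun y => kκmul_bdd ha μ _ _
  · exact Eventually.of_forall fun y => by fun_prop

lemma E1_diff {a : ℝ} (ha : 2 ≤ a) (μ ν : PM) (x : 𝕋) :
    |E1 ha μ x - E1 ha ν x| ≤ a/4 * dist (hof ha μ) (hof ha ν) := by
  unfold E1
  rw [← integral_sub (integrable_of_bdd (kκmul_meas ha μ x) _ fun y => kκmul_bdd ha μ _ y)
    (integrable_of_bdd (kκmul_meas ha ν x) _ fun y => kκmul_bdd ha ν _ y)]
  refine integral_abs_le_of_bdd _ fun y => ?_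
  rw [← mul_sub, abs_mul]
  gcongr
  · exact kκ_bound ha _
  · exact ContinuousMap.dist_apply_le_dist (f := hof ha μ) (g := hof ha ν) y

lemma E2_meas (a : ℝ) (μ : PM) : Measurable (E2 a μ) := by
  have h1 := kκ_meas a
  have : Measurable (fun q : 𝕋 × (𝕋 × ℝ) => kκ a (q.1 - q.2.1)) := by fun_prop
  exact this.stronglyMeasurable.integral_prod_right.measurable

lemma Ef_meas {a : ℝ} (ha : 2 ≤ a) (μ : PM) : Measurable (Ef ha μ) :=
  (E1_cont ha μ).measurable.add (E2_meas a μ)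

lemma Ef_def {a : ℝ} (ha : 2 ≤ a) (μ : PM) (z : 𝕋) :
    Tendsto (fun h : ℝ => (Uof ha μ (z + (h:𝕋)) - Uof ha μ (z - (h:𝕋))) / (2 * h)) (𝓝[>] 0)
      (𝓝 (-(Ef ha μ z))) := by
  have hk := kK_cont a
  have hh := (hof ha μ).continuous
  have t1 : Tendsto (fun h : ℝ => ∫ y, ((kK a ((z - y) + (h:𝕋)) - kK a ((z - y) - (h:𝕋))) / (2 * h)) * hof ha μ y)
      (𝓝[>] 0) (𝓝 (∫ y, (-(kκ a (z - y))) * hof ha μ y)) := by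
    refine tendsto_integral_filter_of_dominated_convergence (fun _ => a/4 * Hb a) ?_ ?_ (integrable_const _) ?_
    · refine Eventually.of_forall fun h => ?_
      apply Continuous.aestronglyMeasurable
      fun_prop
    · filter_upwards [self_mem_nhdsWithin] with h hpos
      refine Eventually.of_forall fun y => ?_
      rw [norm_mul]
      have : 0 ≤ a/4 := by linarith
      gcongr
      · exact kK_quot_bound ha _ hpos
      · exact hof_bdd ha μ y
    · exact Eventually.of_forall fun y => (kK_symm_deriv' a (z - y)).mul_const _
  have t2 : Tendsto (fun h : ℝ => ∫ p : 𝕋 × ℝ, ((kK a ((z - p.1) + (h:𝕋)) - kK a ((z - p.1) - (h:𝕋))) / (2 * h)) ∂(μ : Measure (𝕋 × ℝ)))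
      (𝓝[>] 0) (𝓝 (∫ p : 𝕋 × ℝ, (-(kκ a (z - p.1))) ∂(μ : Measure (𝕋 × ℝ)))) := by
    refine tendsto_integral_filter_of_dominated_convergence (fun _ => a/4) ?_ ?_ (integrable_const _) ?_
    · refine Eventually.of_forall fun h => ?_
      apply Continuous.aestronglyMeasurable
      fun_prop
    · filter_upwards [self_mem_nhdsWithin] with h hpos
      exact Eventually.of_forall fun y => kK_quot_bound ha _ hpos
    · exact Eventually.of_forall fun y => (kK_symm_deriv' a (z - y.1))
  have e : -(Ef ha μ z) = (∫ y, (-(kκ a (z - y))) * hof ha μ y) + ∫ p : 𝕋 × ℝ, (-(kκ a (z - p.1))) ∂(μ : Measure (𝕋 × ℝ)) := by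
    unfold Ef E1 E2
    rw [integral_neg]
    simp only [neg_mul]
    rw [integral_neg]; ring
  rw [e]
  refine (t1.add t2).congr fun h => ?_
  rw [Uof_eq, Uof_eq]
  have e1 : ∫ y, ((kK a ((z - y) + (h:𝕋)) - kK a ((z - y) - (h:𝕋))) / (2 * h)) * hof ha μ y
      = ((∫ y, kK a (z + (h:𝕋) - y) * hof ha μ y) - ∫ y, kK a (z - (h:𝕋) - y) * hof ha μ y) / (2 * h) := by
    rw [← integral_sub (kKmul_integrable ha _ _) (kKmul_integrable ha _ _), ← integral_div]
    congr 1; ext y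
    rw [show z - y + (h:𝕋) = z + (h:𝕋) - y by abel, show z - y - (h:𝕋) = z - (h:𝕋) - y by abel]
    ring
  have e2 : ∫ p : 𝕋 × ℝ, ((kK a ((z - p.1) + (h:𝕋)) - kK a ((z - p.1) - (h:𝕋))) / (2 * h)) ∂(μ : Measure (𝕋 × ℝ))
      = ((∫ p : 𝕋 × ℝ, kK a (z + (h:𝕋) - p.1) ∂(μ : Measure (𝕋 × ℝ)))
        - ∫ p : 𝕋 × ℝ, kK a (z - (h:𝕋) - p.1) ∂(μ : Measure (𝕋 × ℝ))) / (2 * h) := by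
    rw [← integral_sub (kKmu_integrable ha _ _) (kKmu_integrable ha _ _), ← integral_div]
    congr 1; ext p
    rw [show z - p.1 + (h:𝕋) = z + (h:𝕋) - p.1 by abel, show z - p.1 - (h:𝕋) = z - (h:𝕋) - p.1 by abel]
  rw [e1, e2]; ring

lemma Uof_lip {a : ℝ} (ha : 2 ≤ a) (μ : PM) :
    ∃ K : NNReal, LipschitzWith K (fun x : ℝ => Uof ha μ (x : 𝕋)) := by
  refine ⟨Real.toNNReal (a/4 * ‖hof ha μ‖ + a/4), ?_⟩
  apply LipschitzWith.of_dist_le_mul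
  intro x y
  rw [Real.coe_toNNReal _ (by positivity), Real.dist_eq, Real.dist_eq, Uof_eq, Uof_eq]
  have h1 := convK_lip ha (hof ha μ) (x:𝕋) (y:𝕋)
  have h2 := wof_lip ha μ (x:𝕋) (y:𝕋)
  have h3 : ‖(x:𝕋) - (y:𝕋)‖ ≤ |x - y| := by
    rw [← AddCircle.coe_sub]; exact torus_norm_coe_le _
  have h4 := mul_le_mul_of_nonneg_left h3 (by positivity : 0 ≤ a/4 * ‖hof ha μ‖ + a/4)
  rw [add_sub_add_comm]
  refine (abs_add_le _ _).trans ?_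
  linarith

/-! ### Lifting periodic functions and the weak Poisson equation -/

lemma cont_lift1 {g : ℝ → ℝ} (hg : Continuous g) (hp : Function.Periodic g 1) :
    Continuous fun x : 𝕋 => g (torusRep x) := by
  have hq : IsOpenQuotientMap (QuotientAddGroup.mk : ℝ → 𝕋) := QuotientAddGroup.isOpenQuotientMap_mk
  rw [hq.isQuotientMap.continuous_iff]
  have : (fun x : 𝕋 => g (torusRep x)) ∘ (QuotientAddGroup.mk : ℝ → 𝕋) = g := by
    ext x
    exact periodic_torusRep hp x
  rw [this]; exact hg

lemma periodic2 {β : Type*} {g : ℝ × ℝ → β} (hp : ∀ q : ℝ × ℝ, g (q.1 + 1, q.2) = g q) (x v : ℝ) :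
    g (torusRep (x : 𝕋), v) = g (x, v) :=
  periodic_torusRep (g := fun s => g (s, v)) (fun s => hp (s, v)) x

lemma cont_lift2 {g : ℝ × ℝ → ℝ} (hg : Continuous g) (hp : ∀ q : ℝ × ℝ, g (q.1 + 1, q.2) = g q) :
    Continuous fun p : 𝕋 × ℝ => g (torusRep p.1, p.2) := by
  have hq : IsOpenQuotientMap (QuotientAddGroup.mk : ℝ → 𝕋) := QuotientAddGroup.isOpenQuotientMap_mk
  have hq2 := hq.prodMap (IsOpenQuotientMap.id (X := ℝ))
  rw [hq2.isQuotientMap.continuous_iff]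
  have : (fun p : 𝕋 × ℝ => g (torusRep p.1, p.2)) ∘ (Prod.map (QuotientAddGroup.mk : ℝ → 𝕋) id) = g := by
    ext x
    exact periodic2 hp x.1 x.2
  rw [this]; exact hg

lemma periodic_deriv {ψ : ℝ → ℝ} (hp : Function.Periodic ψ 1) : Function.Periodic (deriv ψ) 1 := by
  intro x
  have h : (fun x => ψ (x + 1)) = ψ := funext hp
  have := deriv_comp_add_const ψ 1 x
  rw [h] at this
  exact this.symm

lemma integrable_of_cont_bdd {α : Type*} [MeasurableSpace α] [TopologicalSpace α] [OpensMeasurableSpace α]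
    {μ : Measure α} [IsFiniteMeasure μ]
    {g : α → ℝ} (hg : Continuous g) (C : ℝ) (hC : ∀ x, |g x| ≤ C) : Integrable g μ :=
  integrable_of_bdd hg.measurable C hC

lemma green_torus {a : ℝ} (ha : 2 ≤ a) {ψ : ℝ → ℝ} (hψ : ContDiff ℝ (⊤ : ℕ∞) ψ)
    (hp : Function.Periodic ψ 1) (y : 𝕋) :
    ∫ x : 𝕋, kK a (x - y) * (-(2/a) * deriv (deriv ψ) (torusRep x) + 2 * a * ψ (torusRep x)) = ψ (torusRep y) := by
  obtain ⟨r, rfl⟩ := QuotientAddGroup.mk_surjective y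
  change ∫ x : 𝕋, kK a (x - (r:𝕋)) * (-(2/a) * deriv (deriv ψ) (torusRep x) + 2 * a * ψ (torusRep x)) = ψ (torusRep (r:𝕋))
  rw [periodic_torusRep hp]
  have h1 := integral_add_right_eq_self (μ := (volume : Measure 𝕋)) (fun x : 𝕋 => kK a (x - (r:𝕋)) * (-(2/a) * deriv (deriv ψ) (torusRep x) + 2 * a * ψ (torusRep x))) (r:𝕋)
  rw [← h1]
  have h2 := UnitAddCircle.intervalIntegral_preimage 0 (fun x : 𝕋 => kK a (x + (r:𝕋) - (r:𝕋)) * (-(2/a) * deriv (deriv ψ) (torusRep (x + (r:𝕋))) + 2 * a * ψ (torusRep (x + (r:𝕋)))))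
  rw [zero_add] at h2
  refine h2.symm.trans ?_
  have hθ : ContDiff ℝ (⊤ : ℕ∞) (fun x => ψ (x + r)) := hψ.comp (contDiff_id.add contDiff_const)
  have hθp : Function.Periodic (fun x => ψ (x + r)) 1 := by
    intro x
    change ψ (x + 1 + r) = ψ (x + r)
    rw [show x + 1 + r = x + r + 1 by ring]; exact hp _
  have h3 := kK_weak ha hθ hθp
  have d1 : deriv (fun x => ψ (x + r)) = fun x => deriv ψ (x + r) := by
    ext x; exact deriv_comp_add_const ψ r x
  have d2 : deriv (fun x => deriv ψ (x + r)) = fun x => deriv (deriv ψ) (x + r) := by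
    ext x; exact deriv_comp_add_const (deriv ψ) r x
  simp only [d1, d2, zero_add] at h3
  rw [← h3]
  congr 1; ext x
  change kK a ((x:𝕋) + (r:𝕋) - (r:𝕋)) * (-(2/a) * deriv (deriv ψ) (torusRep ((x:𝕋) + (r:𝕋))) + 2 * a * ψ (torusRep ((x:𝕋) + (r:𝕋)))) = _
  rw [add_sub_cancel_right, ← AddCircle.coe_add, periodic_torusRep hp, periodic_torusRep (periodic_deriv (periodic_deriv hp))]

lemma exists_bdd_torus {g : 𝕋 → ℝ} (hg : Continuous g) : ∃ C, 0 ≤ C ∧ ∀ x, |g x| ≤ C :=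
  ⟨‖(⟨g, hg⟩ : C(𝕋, ℝ))‖, norm_nonneg _, fun x => cmap_bdd ⟨g, hg⟩ x⟩

lemma poisson_lemma {a : ℝ} (ha : 2 ≤ a) (μ : PM) {ψ : ℝ → ℝ} (hψ : ContDiff ℝ (⊤ : ℕ∞) ψ)
    (hp : Function.Periodic ψ 1) :
    (2/a) * ∫ x in Set.Ico (0:ℝ) 1, Uof ha μ (x:𝕋) * deriv (deriv ψ) x
      = (∫ x in Set.Ico (0:ℝ) 1, exp (Uof ha μ (x:𝕋)) * ψ x)
        - ∫ p : 𝕋 × ℝ, ψ (torusRep p.1) ∂(μ : Measure (𝕋 × ℝ)) := by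
  have hψ' : ContDiff ℝ (⊤ : ℕ∞) (deriv ψ) := by
    apply ContDiff.deriv'
    exact hψ
  have hψ'' : Continuous (deriv (deriv ψ)) := hψ'.continuous_deriv (by simp)
  have hp2 := periodic_deriv (periodic_deriv hp)
  have cK := kK_cont a
  set Ψ : 𝕋 → ℝ := fun x => ψ (torusRep x) with hΨ
  set Ψ2 : 𝕋 → ℝ := fun x => deriv (deriv ψ) (torusRep x) with hΨ2
  have cΨ : Continuous Ψ := cont_lift1 hψ.continuous hp
  have cΨ2 : Continuous Ψ2 := cont_lift1 hψ'' hp2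
  set Lp : 𝕋 → ℝ := fun x => -(2/a) * Ψ2 x + 2 * a * Ψ x with hLp
  have cL : Continuous Lp := by fun_prop
  obtain ⟨CL, hCL0, hCL⟩ := exists_bdd_torus cL
  have cU := (Uof ha μ).continuous
  have ch := (hof ha μ).continuous
  have green : ∀ y : 𝕋, ∫ x : 𝕋, kK a (x - y) * Lp x = Ψ y := fun y => green_torus ha hψ hp y
  have e1 : ∫ x in Set.Ico (0:ℝ) 1, Uof ha μ (x:𝕋) * deriv (deriv ψ) x = ∫ x, Uof ha μ x * Ψ2 x := by
    rw [← integral_torus_eq]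
    congr 1; ext x
    simp only [hΨ2, periodic_torusRep hp2]
  have e2 : ∫ x in Set.Ico (0:ℝ) 1, exp (Uof ha μ (x:𝕋)) * ψ x = ∫ x, exp (Uof ha μ x) * Ψ x := by
    rw [← integral_torus_eq]
    congr 1; ext x
    simp only [hΨ, periodic_torusRep hp]
  rw [e1, e2]
  have tI : ∀ {g : 𝕋 → ℝ}, Continuous g → Integrable g volume := by
    intro g hg
    obtain ⟨C, _, hC⟩ := exists_bdd_torus hg
    exact integrable_of_cont_bdd hg C hC
  -- main identity
  have e3 : ∫ x, Uof ha μ x * Lp x = (∫ y, hof ha μ y * Ψ y) + ∫ p : 𝕋 × ℝ, Ψ p.1 ∂(μ : Measure (𝕋 × ℝ)) := by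
    have s1 : ∀ x, Uof ha μ x * Lp x = (∫ y, kK a (x - y) * hof ha μ y * Lp x)
        + ∫ p : 𝕋 × ℝ, kK a (x - p.1) * Lp x ∂(μ : Measure (𝕋 × ℝ)) := by
      intro x
      rw [Uof_eq, integral_mul_const, integral_mul_const]; ring
    simp_rw [s1]
    have i1 : Integrable (Function.uncurry fun (x y : 𝕋) => kK a (x - y) * hof ha μ y * Lp x)
        ((volume : Measure 𝕋).prod volume) := by
      refine integrable_of_cont_bdd (by unfold Function.uncurry; fun_prop) (1 * Hb a * CL) ?_
      rintro ⟨x, y⟩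
      simp only [Function.uncurry, abs_mul]
      gcongr
      · have := Hb_nonneg a; positivity
      · exact kK_abs ha _
      · exact hof_bdd ha μ y
      · exact hCL x
    have i2 : Integrable (Function.uncurry fun (x : 𝕋) (p : 𝕋 × ℝ) => kK a (x - p.1) * Lp x)
        ((volume : Measure 𝕋).prod (μ : Measure (𝕋 × ℝ))) := by
      refine integrable_of_cont_bdd (by unfold Function.uncurry; fun_prop) (1 * CL) ?_
      rintro ⟨x, y⟩
      simp only [Function.uncurry, abs_mul]
      gcongr
      · exact kK_abs ha _
      · exact hCL x
    have j1 : Integrable (fun x => ∫ y, kK a (x - y) * hof ha μ y * Lp x) volume :=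
      i1.integral_prod_left
    have j2 : Integrable (fun x => ∫ p : 𝕋 × ℝ, kK a (x - p.1) * Lp x ∂(μ : Measure (𝕋 × ℝ)))
        volume := i2.integral_prod_left
    rw [integral_add j1 j2, integral_integral_swap i1, integral_integral_swap i2]
    congr 1
    · congr 1; ext y
      rw [← green y, ← integral_const_mul]
      congr 1; ext x; ring
    · congr 1; ext p
      exact green p.1
  have e4 : ∫ x, Uof ha μ x * Lp x = -(2/a) * (∫ x, Uof ha μ x * Ψ2 x) + 2 * a * ∫ x, Uof ha μ x * Ψ x := by
    rw [← integral_const_mul, ← integral_const_mul, ← integral_add (tI (by fun_prop)) (tI (by fun_prop))]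
    congr 1; ext x
    simp only [hLp]; ring
  have e5 : ∫ y, hof ha μ y * Ψ y = 2 * a * (∫ x, Uof ha μ x * Ψ x) - ∫ x, exp (Uof ha μ x) * Ψ x := by
    rw [← integral_const_mul, ← integral_sub (tI (by fun_prop)) (tI (by fun_prop))]
    congr 1; ext x
    rw [hof_eq]; ring
  rw [e4, e5] at e3
  linarith

/-! ### Continuity of the nonlinear functional -/

abbrev 𝕏 := 𝕋 × ℝ

lemma cont_integral2 (g : 𝕏 × 𝕏 → ℝ) (hg : Continuous g) (C : ℝ) (hC : ∀ p, |g p| ≤ C) :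
    Continuous fun μ : PM => ∫ z, g z ∂((μ : Measure 𝕏).prod (μ : Measure 𝕏)) := by
  have h1 := ProbabilityMeasure.continuous_integral_boundedContinuousFunction (X := 𝕏 × 𝕏)
    (f := BoundedContinuousFunction.ofNormedAddCommGroup g hg C hC)
  have h2 : Continuous fun μ : PM => μ.prod μ := by fun_prop
  exact h1.comp h2

/-- no two particles at the same place with different velocities -/
def Good (f : PM) : Prop :=
  ((f : Measure 𝕏).prod (f : Measure 𝕏)) {z | z.1.1 = z.2.1 ∧ z.1.2 ≠ z.2.2} = 0

def thη (η : ℝ) (z : 𝕋) : ℝ := 1 - min 1 (‖z‖ / η)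

lemma thη_cont (η : ℝ) : Continuous (thη η) := by unfold thη; fun_prop

lemma thη_mem {η : ℝ} (hη : 0 < η) (z : 𝕋) : 0 ≤ thη η z ∧ thη η z ≤ 1 := by
  unfold thη
  have h1 : min 1 (‖z‖/η) ≤ 1 := min_le_left _ _
  have h2 : 0 ≤ min 1 (‖z‖/η) := le_min zero_le_one (by positivity)
  constructor <;> linarith

lemma kκη_cont {a : ℝ} (ha : 2 ≤ a) {η : ℝ} (hη : 0 < η) : Continuous fun z : 𝕋 => kκ a z * (1 - thη η z) := by
  rw [continuous_iff_continuousAt]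
  intro z
  by_cases hz : z = 0
  · subst hz
    have h0 : (fun z : 𝕋 => kκ a z * (1 - thη η z)) 0 = 0 := by simp [thη]
    unfold ContinuousAt
    rw [h0]
    have hc : Tendsto (fun z : 𝕋 => a/4 * (1 - thη η z)) (𝓝 0) (𝓝 0) := by
      have h1 : Continuous fun z : 𝕋 => a/4 * (1 - thη η z) := by
        have := thη_cont η
        fun_prop
      have h2 := h1.tendsto 0
      simpa [thη] using h2
    refine squeeze_zero_norm (fun z => ?_) hc
    rw [Real.norm_eq_abs, abs_mul]
    have := (thη_mem hη z)
    rw [abs_of_nonneg (by linarith : 0 ≤ 1 - thη η z)]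
    exact mul_le_mul_of_nonneg_right (kκ_bound ha z) (by linarith)
  · have h1 := kκ_contAt a hz
    have h2 := (thη_cont η).continuousAt (x := z)
    fun_prop

lemma Qη_tendsto {f : PM} (hf : Good f) {ψ : 𝕏 → ℝ} (hψ : Continuous ψ) {C : ℝ} (hC : ∀ p, |ψ p| ≤ C) :
    Tendsto (fun m : ℕ => ∫ z : 𝕏 × 𝕏, thη (1/((m:ℝ)+1)) (z.1.1 - z.2.1) * |ψ z.1 - ψ z.2|
      ∂((f : Measure 𝕏).prod (f : Measure 𝕏))) atTop (𝓝 0) := by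
  have h0 : (0:ℝ) = ∫ z : 𝕏 × 𝕏, (0:ℝ) ∂((f : Measure 𝕏).prod (f : Measure 𝕏)) := by simp
  rw [h0]
  have hC0 : 0 ≤ C := (abs_nonneg _).trans (hC 0)
  refine tendsto_integral_of_dominated_convergence (fun _ => 2 * C) (fun m => ?_) (integrable_const _)
    (fun m => Eventually.of_forall fun z => ?_) ?_
  · have := thη_cont (1/((m:ℝ)+1))
    apply Continuous.aestronglyMeasurable
    fun_prop
  · have h1 := thη_mem (η := 1/((m:ℝ)+1)) (by positivity) (z.1.1 - z.2.1)
    rw [Real.norm_eq_abs, abs_mul, abs_abs, abs_of_nonneg h1.1]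
    have h2 := (abs_sub (ψ z.1) (ψ z.2)).trans (add_le_add (hC z.1) (hC z.2))
    have := abs_nonneg (ψ z.1 - ψ z.2)
    nlinarith
  · have hae : ∀ᵐ z ∂((f : Measure 𝕏).prod (f : Measure 𝕏)), ¬ (z.1.1 = z.2.1 ∧ z.1.2 ≠ z.2.2) := by
      rw [ae_iff]; simpa [Good] using hf
    filter_upwards [hae] with z hz
    by_cases hx : z.1.1 = z.2.1
    · have hv : z.1.2 = z.2.2 := by
        by_contra h; exact hz ⟨hx, h⟩
      have : z.1 = z.2 := Prod.ext hx hv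
      simp [this]
    · have hn : 0 < ‖z.1.1 - z.2.1‖ := by
        rw [norm_pos_iff]; exact sub_ne_zero.2 hx
      refine tendsto_const_nhds.congr' ?_
      obtain ⟨N, hN⟩ := exists_nat_gt (1 / ‖z.1.1 - z.2.1‖)
      filter_upwards [eventually_ge_atTop N] with m hm
      have hm' : (N:ℝ) ≤ m := by exact_mod_cast hm
      have : 1 ≤ ‖z.1.1 - z.2.1‖ / (1/((m:ℝ)+1)) := by
        rw [div_div_eq_mul_div, div_one]
        rw [div_lt_iff₀ hn] at hN
        nlinarith
      simp only [thη]
      rw [min_eq_left this]; simp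

lemma D_cont {a : ℝ} (ha : 2 ≤ a) {f : PM} (hf : Good f) {ψ : 𝕏 → ℝ} (hψ : Continuous ψ) {C : ℝ} (hC : ∀ p, |ψ p| ≤ C) :
    ContinuousAt (fun μ : PM => ∫ p, E2 a μ p.1 * ψ p ∂(μ : Measure 𝕏)) f := by
  have hC0 : 0 ≤ C := (abs_nonneg _).trans (hC 0)
  have hκm := kκ_meas a
  have hψm := hψ.measurable
  have key : ∀ η : ℝ, 0 < η → ∀ μ : PM,
      |(∫ p, E2 a μ p.1 * ψ p ∂(μ : Measure 𝕏)) -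
        ∫ z : 𝕏 × 𝕏, (kκ a (z.1.1 - z.2.1) * (1 - thη η (z.1.1 - z.2.1))) * ψ z.1 ∂((μ : Measure 𝕏).prod (μ : Measure 𝕏))|
      ≤ a/8 * ∫ z : 𝕏 × 𝕏, thη η (z.1.1 - z.2.1) * |ψ z.1 - ψ z.2| ∂((μ : Measure 𝕏).prod (μ : Measure 𝕏)) := by
    intro η hη μ
    have hθ := thη_cont η
    have hθm := hθ.measurable
    have iA : Integrable (fun z : 𝕏 × 𝕏 => kκ a (z.1.1 - z.2.1) * ψ z.1) ((μ : Measure 𝕏).prod (μ : Measure 𝕏)) := by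
      refine integrable_of_bdd (by fun_prop) (a/4 * C) fun z => ?_
      rw [abs_mul]
      exact mul_le_mul (kκ_bound ha _) (hC _) (abs_nonneg _) (by linarith)
    have iR1 : Integrable (fun z : 𝕏 × 𝕏 => kκ a (z.1.1 - z.2.1) * thη η (z.1.1 - z.2.1) * ψ z.1) ((μ : Measure 𝕏).prod (μ : Measure 𝕏)) := by
      refine integrable_of_bdd (by fun_prop) (a/4 * 1 * C) fun z => ?_
      have h := thη_mem hη (z.1.1 - z.2.1)
      rw [abs_mul, abs_mul, abs_of_nonneg h.1]
      have := kκ_bound ha (z.1.1 - z.2.1)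
      have := hC z.1
      have h0 := h.1
      gcongr
      exact h.2
    have iR2 : Integrable (fun z : 𝕏 × 𝕏 => kκ a (z.1.1 - z.2.1) * thη η (z.1.1 - z.2.1) * ψ z.2) ((μ : Measure 𝕏).prod (μ : Measure 𝕏)) := by
      refine integrable_of_bdd (by fun_prop) (a/4 * 1 * C) fun z => ?_
      have h := thη_mem hη (z.1.1 - z.2.1)
      rw [abs_mul, abs_mul, abs_of_nonneg h.1]
      have := kκ_bound ha (z.1.1 - z.2.1)
      have := hC z.2
      have h0 := h.1
      gcongr
      exact h.2
    have e1 : ∫ p, E2 a μ p.1 * ψ p ∂(μ : Measure 𝕏) = ∫ z : 𝕏 × 𝕏, kκ a (z.1.1 - z.2.1) * ψ z.1 ∂((μ : Measure 𝕏).prod (μ : Measure 𝕏)) := by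
      rw [integral_prod _ iA]
      congr 1; ext p
      change _ = ∫ y : 𝕏, kκ a (p.1 - y.1) * ψ p ∂(μ : Measure 𝕏)
      rw [integral_mul_const]; rfl
    have e2 : (∫ z : 𝕏 × 𝕏, kκ a (z.1.1 - z.2.1) * ψ z.1 ∂((μ : Measure 𝕏).prod (μ : Measure 𝕏))) -
        (∫ z : 𝕏 × 𝕏, (kκ a (z.1.1 - z.2.1) * (1 - thη η (z.1.1 - z.2.1))) * ψ z.1 ∂((μ : Measure 𝕏).prod (μ : Measure 𝕏)))
        = ∫ z : 𝕏 × 𝕏, kκ a (z.1.1 - z.2.1) * thη η (z.1.1 - z.2.1) * ψ z.1 ∂((μ : Measure 𝕏).prod (μ : Measure 𝕏)) := by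
      have : (fun z : 𝕏 × 𝕏 => (kκ a (z.1.1 - z.2.1) * (1 - thη η (z.1.1 - z.2.1))) * ψ z.1)
        = fun z => kκ a (z.1.1 - z.2.1) * ψ z.1 - kκ a (z.1.1 - z.2.1) * thη η (z.1.1 - z.2.1) * ψ z.1 := by
        ext z; ring
      rw [this, integral_sub iA iR1]; ring
    have e3 : (∫ z : 𝕏 × 𝕏, kκ a (z.1.1 - z.2.1) * thη η (z.1.1 - z.2.1) * ψ z.1 ∂((μ : Measure 𝕏).prod (μ : Measure 𝕏)))
        = - ∫ z : 𝕏 × 𝕏, kκ a (z.1.1 - z.2.1) * thη η (z.1.1 - z.2.1) * ψ z.2 ∂((μ : Measure 𝕏).prod (μ : Measure 𝕏)) := by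
      rw [← integral_prod_swap, ← integral_neg]
      congr 1; ext z
      simp only [Prod.fst_swap, Prod.snd_swap]
      have hs : z.2.1 - z.1.1 = -(z.1.1 - z.2.1) := by abel
      rw [hs, kκ_neg]
      have : thη η (-(z.1.1 - z.2.1)) = thη η (z.1.1 - z.2.1) := by simp [thη, norm_sub_rev]
      rw [this]; ring
    have e4 : 2 * (∫ z : 𝕏 × 𝕏, kκ a (z.1.1 - z.2.1) * thη η (z.1.1 - z.2.1) * ψ z.1 ∂((μ : Measure 𝕏).prod (μ : Measure 𝕏)))
        = ∫ z : 𝕏 × 𝕏, kκ a (z.1.1 - z.2.1) * thη η (z.1.1 - z.2.1) * (ψ z.1 - ψ z.2) ∂((μ : Measure 𝕏).prod (μ : Measure 𝕏)) := by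
      have : (fun z : 𝕏 × 𝕏 => kκ a (z.1.1 - z.2.1) * thη η (z.1.1 - z.2.1) * (ψ z.1 - ψ z.2))
        = fun z => kκ a (z.1.1 - z.2.1) * thη η (z.1.1 - z.2.1) * ψ z.1 - kκ a (z.1.1 - z.2.1) * thη η (z.1.1 - z.2.1) * ψ z.2 := by
        ext z; ring
      rw [this, integral_sub iR1 iR2]; linarith
    have iQ : Integrable (fun z : 𝕏 × 𝕏 => a/4 * (thη η (z.1.1 - z.2.1) * |ψ z.1 - ψ z.2|)) ((μ : Measure 𝕏).prod (μ : Measure 𝕏)) := by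
      refine integrable_of_bdd (by fun_prop) (a/4 * (1 * (C + C))) fun z => ?_
      have h := thη_mem hη (z.1.1 - z.2.1)
      rw [abs_mul, abs_mul, abs_of_nonneg h.1, abs_abs, abs_of_nonneg (by linarith : 0 ≤ a/4)]
      have := (abs_sub (ψ z.1) (ψ z.2)).trans (add_le_add (hC z.1) (hC z.2))
      gcongr
      exact h.2
    have e5 : |∫ z : 𝕏 × 𝕏, kκ a (z.1.1 - z.2.1) * thη η (z.1.1 - z.2.1) * (ψ z.1 - ψ z.2) ∂((μ : Measure 𝕏).prod (μ : Measure 𝕏))|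
        ≤ a/4 * ∫ z : 𝕏 × 𝕏, thη η (z.1.1 - z.2.1) * |ψ z.1 - ψ z.2| ∂((μ : Measure 𝕏).prod (μ : Measure 𝕏)) := by
      rw [← integral_const_mul, ← Real.norm_eq_abs]
      refine norm_integral_le_of_norm_le iQ (Eventually.of_forall fun z => ?_)
      have h := thη_mem hη (z.1.1 - z.2.1)
      rw [Real.norm_eq_abs, abs_mul, abs_mul, abs_of_nonneg h.1, mul_assoc]
      exact mul_le_mul_of_nonneg_right (kκ_bound ha _) (mul_nonneg h.1 (abs_nonneg _))
    rw [e1, e2]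
    rw [← e4, abs_mul, abs_two] at e5
    linarith
  rw [Metric.continuousAt_iff']
  intro e he
  have hq := Qη_tendsto hf hψ hC
  have hq2 : Tendsto (fun m : ℕ => a/8 * ∫ z : 𝕏 × 𝕏, thη (1/((m:ℝ)+1)) (z.1.1 - z.2.1) * |ψ z.1 - ψ z.2|
      ∂((f : Measure 𝕏).prod (f : Measure 𝕏))) atTop (𝓝 0) := by
    simpa using hq.const_mul (a/8)
  obtain ⟨m, hm⟩ := (hq2.eventually (gt_mem_nhds (show (0:ℝ) < e/4 by linarith))).exists
  set η : ℝ := 1/((m:ℝ)+1) with hηd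
  have hη : 0 < η := by positivity
  have hκc := kκη_cont ha hη
  have hθ := thη_cont η
  have c1 := cont_integral2 (fun z => (kκ a (z.1.1 - z.2.1) * (1 - thη η (z.1.1 - z.2.1))) * ψ z.1)
    ((hκc.comp (by fun_prop : Continuous fun z : 𝕏 × 𝕏 => z.1.1 - z.2.1)).mul (by fun_prop)) (a/4 * 1 * C) (by
      intro z
      have h := thη_mem hη (z.1.1 - z.2.1)
      rw [abs_mul, abs_mul, abs_of_nonneg (by linarith : 0 ≤ 1 - thη η (z.1.1 - z.2.1))]
      have := kκ_bound ha (z.1.1 - z.2.1)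
      have := hC z.1
      gcongr <;> linarith)
  have c2 := cont_integral2 (fun z => thη η (z.1.1 - z.2.1) * |ψ z.1 - ψ z.2|) (by fun_prop) (1 * (C + C)) (by
      intro z
      have h := thη_mem hη (z.1.1 - z.2.1)
      rw [abs_mul, abs_of_nonneg h.1, abs_abs]
      have := (abs_sub (ψ z.1) (ψ z.2)).trans (add_le_add (hC z.1) (hC z.2))
      gcongr
      exact h.2)
  have t1 := Metric.continuousAt_iff'.1 (c1.continuousAt (x := f)) (e/4) (by linarith)
  have t2 := ((c2.const_mul (a/8)).continuousAt (x := f)).eventually (gt_mem_nhds hm)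
  filter_upwards [t1, t2] with μ h1 h2
  have k1 := key η hη μ
  have k2 := key η hη f
  rw [Real.dist_eq] at h1 ⊢
  rw [abs_lt] at h1 ⊢
  rw [abs_le] at k1 k2
  constructor <;> linarith [h1.1, h1.2, k1.1, k1.2, k2.1, k2.2]

def Bfun {a : ℝ} (ha : 2 ≤ a) (ψ₁ ψ₂ : 𝕏 → ℝ) (μ : PM) : ℝ :=
  ∫ p, (ψ₁ p + Ef ha μ p.1 * ψ₂ p) ∂(μ : Measure 𝕏)

lemma Bfun_bdd {a : ℝ} (ha : 2 ≤ a) {ψ₁ ψ₂ : 𝕏 → ℝ} {C₁ C₂ : ℝ} (hC₁ : ∀ p, |ψ₁ p| ≤ C₁)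
    (hC₂ : ∀ p, |ψ₂ p| ≤ C₂) (μ : PM) : |Bfun ha ψ₁ ψ₂ μ| ≤ C₁ + CE a * C₂ := by
  refine integral_abs_le_of_bdd _ fun p => (abs_add_le _ _).trans (add_le_add (hC₁ p) ?_)
  rw [abs_mul]
  exact mul_le_mul (Ef_bdd ha μ _) (hC₂ p) (abs_nonneg _) (CE_nonneg ha)

lemma B_cont {a : ℝ} (ha : 2 ≤ a) {f : PM} (hf : Good f) {ψ₁ ψ₂ : 𝕏 → ℝ}
    (h₁ : Continuous ψ₁) (h₂ : Continuous ψ₂) {C₁ C₂ : ℝ} (hC₁ : ∀ p, |ψ₁ p| ≤ C₁)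
    (hC₂ : ∀ p, |ψ₂ p| ≤ C₂) : ContinuousAt (Bfun ha ψ₁ ψ₂) f := by
  have hC0 : 0 ≤ C₂ := (abs_nonneg _).trans (hC₂ 0)
  have hH := Hb_nonneg a
  have i1 : ∀ μ : PM, Integrable ψ₁ (μ : Measure 𝕏) := fun μ => integrable_of_cont_bdd h₁ C₁ hC₁
  have i2 : ∀ μ ν : PM, Integrable (fun p => E1 ha ν p.1 * ψ₂ p) (μ : Measure 𝕏) := fun μ ν => by
    have := E1_cont ha ν
    refine integrable_of_cont_bdd (by fun_prop) (a/4 * Hb a * C₂) fun p => ?_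
    rw [abs_mul]
    exact mul_le_mul (E1_bdd ha ν _) (hC₂ p) (abs_nonneg _) (by positivity)
  have i3 : ∀ μ : PM, Integrable (fun p => E2 a μ p.1 * ψ₂ p) (μ : Measure 𝕏) := fun μ => by
    have := E2_meas a μ
    have := h₂.measurable
    refine integrable_of_bdd (by fun_prop) (a/4 * C₂) fun p => ?_
    rw [abs_mul]
    exact mul_le_mul (E2_bdd ha μ _) (hC₂ p) (abs_nonneg _) (by positivity)
  have hs : Bfun ha ψ₁ ψ₂ = fun μ : PM => (∫ p, ψ₁ p ∂(μ : Measure 𝕏)) + (∫ p, E1 ha μ p.1 * ψ₂ p ∂(μ : Measure 𝕏))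
      + ∫ p, E2 a μ p.1 * ψ₂ p ∂(μ : Measure 𝕏) := by
    ext μ
    have i12 : Integrable (fun p => ψ₁ p + E1 ha μ p.1 * ψ₂ p) (μ : Measure 𝕏) := (i1 μ).add (i2 μ μ)
    rw [← integral_add (i1 μ) (i2 μ μ), ← integral_add i12 (i3 μ)]
    unfold Bfun
    congr 1; ext p
    simp only [Ef]; ring
  rw [hs]
  refine ((cont_integral ψ₁ h₁ C₁ hC₁).continuousAt.add ?_).add (D_cont ha hf h₂ hC₂)
  have hs2 : (fun μ : PM => ∫ p, E1 ha μ p.1 * ψ₂ p ∂(μ : Measure 𝕏)) =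
      fun μ : PM => (∫ p, E1 ha f p.1 * ψ₂ p ∂(μ : Measure 𝕏)) + ∫ p, (E1 ha μ p.1 - E1 ha f p.1) * ψ₂ p ∂(μ : Measure 𝕏) := by
    ext μ
    rw [← sub_eq_iff_eq_add', ← integral_sub (i2 μ μ) (i2 μ f)]
    congr 1; ext p; ring
  rw [hs2]
  have cE := E1_cont ha f
  refine ((cont_integral (fun p => E1 ha f p.1 * ψ₂ p) (by fun_prop) (a/4 * Hb a * C₂) fun p => by
    rw [abs_mul]
    exact mul_le_mul (E1_bdd ha f _) (hC₂ p) (abs_nonneg _) (by positivity)).continuousAt).add ?_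
  unfold ContinuousAt
  have h0 : ∫ p, (E1 ha f p.1 - E1 ha f p.1) * ψ₂ p ∂(f : Measure 𝕏) = 0 := by simp
  beta_reduce
  rw [h0]
  have hd : Tendsto (fun μ : PM => a/4 * dist (hof ha μ) (hof ha f) * C₂) (𝓝 f) (𝓝 0) := by
    have hc : Continuous fun μ : PM => a/4 * dist (hof ha μ) (hof ha f) * C₂ := by
      have := hof_cont ha
      fun_prop
    simpa using hc.tendsto f
  refine squeeze_zero_norm (fun μ => ?_) hd
  refine integral_abs_le_of_bdd _ fun p => ?_
  rw [abs_mul]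
  exact mul_le_mul (E1_diff ha μ f _) (hC₂ p) (abs_nonneg _) (by positivity)

/-! ### Test functions -/

lemma bdd_of_periodic {F : Type*} [NormedAddCommGroup F] {g : ℝ × ℝ → F} (hg : Continuous g)
    (hp : ∀ q : ℝ × ℝ, g (q.1 + 1, q.2) = g q) {R : ℝ} (hR : ∀ q : ℝ × ℝ, R ≤ |q.2| → g q = 0) :
    ∃ C, 0 ≤ C ∧ ∀ q, ‖g q‖ ≤ C := by
  obtain ⟨C, hC⟩ := (isCompact_Icc (a := ((0:ℝ), -|R|)) (b := ((1:ℝ), |R|))).exists_bound_of_continuousOn hg.continuousOn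
  refine ⟨max C 0, le_max_right _ _, fun q => ?_⟩
  by_cases h : R ≤ |q.2|
  · rw [hR q h]; simp
  · push Not at h
    rw [show q = (q.1, q.2) from rfl, ← periodic2 hp q.1 q.2]
    refine (hC _ ?_).trans (le_max_left _ _)
    have hm := torusRep_mem (q.1 : 𝕋)
    have h3 := abs_le.1 (h.le.trans (le_abs_self R))
    exact ⟨⟨hm.1, h3.1⟩, ⟨hm.2.le, h3.2⟩⟩

lemma fderiv_periodic {F : Type*} [NormedAddCommGroup F] [NormedSpace ℝ F] {g : ℝ × ℝ → F}
    (hp : ∀ q : ℝ × ℝ, g (q.1 + 1, q.2) = g q) (q : ℝ × ℝ) : fderiv ℝ g (q.1 + 1, q.2) = fderiv ℝ g q := by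
  have h : (fun x => g (x + ((1:ℝ), (0:ℝ)))) = g := by
    ext x
    rw [← hp x]
    congr 1
    ext <;> simp
  have := fderiv_comp_add_right (𝕜 := ℝ) (f := g) (x := q) ((1:ℝ), (0:ℝ))
  rw [h] at this
  rw [this]
  congr 1
  ext <;> simp

lemma fderiv_supp {F : Type*} [NormedAddCommGroup F] [NormedSpace ℝ F] {g : ℝ × ℝ → F}
    {R : ℝ} (hR : ∀ q : ℝ × ℝ, R ≤ |q.2| → g q = 0) (q : ℝ × ℝ) (hq : R + 1 ≤ |q.2|) : fderiv ℝ g q = 0 := by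
  have h : g =ᶠ[𝓝 q] fun _ => 0 := by
    have ho : IsOpen {q : ℝ × ℝ | R < |q.2|} := isOpen_lt continuous_const (by fun_prop)
    filter_upwards [ho.mem_nhds (show R < |q.2| by linarith)] with z hz
    exact hR z hz.le
  rw [h.fderiv_eq]; simp

def tl (g : ℝ × ℝ → ℝ) (p : 𝕏) : ℝ := g (torusRep p.1, p.2)
def psi1 (φ : ℝ × ℝ → ℝ) : 𝕏 → ℝ := tl fun q => q.2 * fderiv ℝ φ q (1, 0)
def psi2 (φ : ℝ × ℝ → ℝ) : 𝕏 → ℝ := tl fun q => fderiv ℝ φ q (0, 1)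

lemma tf_basic {φ : ℝ × ℝ → ℝ} (hφ : TestFun φ) :
    Continuous (tl φ) ∧ Continuous (psi1 φ) ∧ Continuous (psi2 φ) ∧
    ∃ C, 0 ≤ C ∧ (∀ p, |tl φ p| ≤ C) ∧ (∀ p, |psi1 φ p| ≤ C) ∧ (∀ p, |psi2 φ p| ≤ C) := by
  obtain ⟨hs, hp, R, hR⟩ := hφ
  have cd : Continuous (fderiv ℝ φ) := hs.continuous_fderiv (by simp)
  have pd := fderiv_periodic hp
  have sd := fderiv_supp hR
  have c1 : Continuous fun q : ℝ × ℝ => q.2 * fderiv ℝ φ q (1, 0) := by fun_prop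
  have c2 : Continuous fun q : ℝ × ℝ => fderiv ℝ φ q (0, 1) := by fun_prop
  have p1 : ∀ q : ℝ × ℝ, (fun q : ℝ × ℝ => q.2 * fderiv ℝ φ q (1, 0)) (q.1 + 1, q.2) = (fun q : ℝ × ℝ => q.2 * fderiv ℝ φ q (1, 0)) q := by
    intro q; simp only [pd]
  have p2 : ∀ q : ℝ × ℝ, (fun q : ℝ × ℝ => fderiv ℝ φ q (0, 1)) (q.1 + 1, q.2) = (fun q : ℝ × ℝ => fderiv ℝ φ q (0, 1)) q := by
    intro q; simp only [pd]
  obtain ⟨C0, h0, hC0⟩ := bdd_of_periodic hs.continuous hp hR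
  obtain ⟨C1, h1, hC1⟩ := bdd_of_periodic c1 p1 (R := R + 1) (by intro q hq; simp [sd q hq])
  obtain ⟨C2, h2, hC2⟩ := bdd_of_periodic c2 p2 (R := R + 1) (by intro q hq; simp [sd q hq])
  refine ⟨cont_lift2 hs.continuous hp, cont_lift2 c1 p1, cont_lift2 c2 p2, C0 + C1 + C2, by positivity, ?_, ?_, ?_⟩
  · intro p; have := hC0 (torusRep p.1, p.2); rw [Real.norm_eq_abs] at this; unfold tl; linarith
  · intro p; have := hC1 (torusRep p.1, p.2); rw [Real.norm_eq_abs] at this; unfold psi1 tl; linarith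
  · intro p; have := hC2 (torusRep p.1, p.2); rw [Real.norm_eq_abs] at this; unfold psi2 tl; linarith

lemma taylor_test {φ : ℝ × ℝ → ℝ} (hφ : TestFun φ) (M : ℝ) (hM : 0 ≤ M) : ∃ C, 0 ≤ C ∧
    ∀ τ, 0 < τ → τ ≤ 1 → ∀ (p : 𝕏) (E : ℝ), |E| ≤ M →
      |tl φ (p.1 + ((τ * p.2 : ℝ) : 𝕋), p.2 + τ * E) - tl φ p - τ * (psi1 φ p + E * psi2 φ p)| ≤ C * τ ^ 2 := by
  obtain ⟨hs, hp, R, hR⟩ := hφ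
  have hs' : ContDiff ℝ (⊤ : ℕ∞) (fderiv ℝ φ) := hs.fderiv_right (by simp)
  have cd : Continuous (fderiv ℝ φ) := hs.continuous_fderiv (by simp)
  have pd := fderiv_periodic hp
  have sd := fderiv_supp hR
  have cdd : Continuous (fderiv ℝ (fderiv ℝ φ)) := hs'.continuous_fderiv (by simp)
  obtain ⟨L, hL0, hL⟩ := bdd_of_periodic cdd (fderiv_periodic pd) (fderiv_supp sd)
  have hdφ : Differentiable ℝ φ := hs.differentiable (by simp)
  have hddφ : Differentiable ℝ (fderiv ℝ φ) := hs'.differentiable (by simp)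
  have lip : ∀ z w, ‖fderiv ℝ φ z - fderiv ℝ φ w‖ ≤ L * ‖z - w‖ := by
    intro z w
    exact Convex.norm_image_sub_le_of_norm_fderiv_le (s := Set.univ) (fun x _ => hddφ x) (fun x _ => hL x)
      convex_univ (Set.mem_univ w) (Set.mem_univ z)
  set A : ℝ := |R| + 2 + M with hA
  have hA0 : 0 ≤ A := by positivity
  refine ⟨L * (A + M) * (A + M), by positivity, ?_⟩
  intro τ hτ hτ1 p E hE
  obtain ⟨x, hx⟩ := QuotientAddGroup.mk_surjective p.1
  replace hx : ((x:ℝ):𝕋) = p.1 := hx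
  set v := p.2
  have pg1 : ∀ q : ℝ × ℝ, (fun q : ℝ × ℝ => q.2 * fderiv ℝ φ q (1, 0)) (q.1 + 1, q.2) = (fun q : ℝ × ℝ => q.2 * fderiv ℝ φ q (1, 0)) q := by
    intro q; simp only [pd]
  have pg2 : ∀ q : ℝ × ℝ, (fun q : ℝ × ℝ => fderiv ℝ φ q (0, 1)) (q.1 + 1, q.2) = (fun q : ℝ × ℝ => fderiv ℝ φ q (0, 1)) q := by
    intro q; simp only [pd]
  have e1 : tl φ (p.1 + ((τ * v : ℝ) : 𝕋), v + τ * E) = φ (x + τ * v, v + τ * E) := by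
    unfold tl
    rw [← hx, ← AddCircle.coe_add]
    exact periodic2 hp _ _
  have e2 : tl φ p = φ (x, v) := by
    unfold tl; rw [← hx]; exact periodic2 hp _ _
  have e3 : psi1 φ p = v * fderiv ℝ φ (x, v) (1, 0) := by
    unfold psi1 tl; rw [← hx]; exact periodic2 (g := fun q : ℝ × ℝ => q.2 * fderiv ℝ φ q (1, 0)) pg1 _ _
  have e4 : psi2 φ p = fderiv ℝ φ (x, v) (0, 1) := by
    unfold psi2 tl; rw [← hx]; exact periodic2 (g := fun q : ℝ × ℝ => fderiv ℝ φ q (0, 1)) pg2 _ _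
  rw [e1, e2, e3, e4]
  by_cases hv : A ≤ |v|
  · have h1 : R + 1 ≤ |v| := by linarith [le_abs_self R]
    have h2 : R ≤ |v + τ * E| := by
      have h3 : |τ * E| ≤ M := by
        rw [abs_mul, abs_of_pos hτ]
        calc τ * |E| ≤ 1 * M := by gcongr
          _ = M := one_mul M
      have h4 : |v| ≤ |v + τ * E| + |τ * E| := by
        have := abs_sub (v + τ * E) (τ * E)
        simpa using this
      linarith [le_abs_self R]
    rw [hR (x, v) (by linarith), hR (x + τ * v, v + τ * E) h2, sd (x, v) h1]
    simp; positivity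
  · push Not at hv
    set d : ℝ × ℝ := (τ * v, τ * E) with hd
    have hdn : ‖d‖ ≤ τ * (A + M) := by
      rw [Prod.norm_def, max_le_iff]
      simp only [hd, Real.norm_eq_abs, abs_mul, abs_of_pos hτ]
      constructor
      · gcongr; linarith
      · gcongr; linarith
    have hf : fderiv ℝ φ (x, v) d = τ * (v * fderiv ℝ φ (x, v) (1, 0) + E * fderiv ℝ φ (x, v) (0, 1)) := by
      have : d = (τ * v) • ((1:ℝ), (0:ℝ)) + (τ * E) • ((0:ℝ), (1:ℝ)) := by
        ext <;> simp [hd]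
      rw [this, map_add, map_smul, map_smul]
      simp only [smul_eq_mul]; ring
    rw [← hf]
    have h5 := Convex.norm_image_sub_le_of_norm_fderiv_le' (𝕜 := ℝ) (f := φ) (s := Metric.closedBall (x, v) (τ * (A + M)))
      (φ := fderiv ℝ φ (x, v)) (C := L * (τ * (A + M))) (fun z _ => hdφ z) (fun z hz => by
        refine (lip z (x, v)).trans ?_
        rw [Metric.mem_closedBall, dist_eq_norm] at hz
        gcongr) (convex_closedBall _ _) (Metric.mem_closedBall_self (by positivity)) (y := (x + τ * v, v + τ * E)) (by
        rw [Metric.mem_closedBall, dist_eq_norm]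
        have : (x + τ * v, v + τ * E) - (x, v) = d := by ext <;> simp [hd]
        rw [this]; exact hdn)
    have h6 : (x + τ * v, v + τ * E) - (x, v) = d := by ext <;> simp [hd]
    rw [h6, Real.norm_eq_abs] at h5
    refine h5.trans ?_
    calc L * (τ * (A + M)) * ‖d‖ ≤ L * (τ * (A + M)) * (τ * (A + M)) := by gcongr
      _ = _ := by ring

/-! ### The discrete dynamics -/

def MM := {Z : 𝕏 → 𝕏 // Measurable Z}

def law (f₀ : PM) (Z : MM) : PM := f₀.map Z.2.aemeasurable

def stepZ {a : ℝ} (ha : 2 ≤ a) (f₀ : PM) (τ : ℝ) (Z : MM) : MM :=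
  ⟨fun ω => ((Z.1 ω).1 + ((τ * (Z.1 ω).2 : ℝ) : 𝕋), (Z.1 ω).2 + τ * Ef ha (law f₀ Z) (Z.1 ω).1), by
    have h := Z.2
    have h1 : Measurable fun x : ℝ => (x : 𝕋) := (AddCircle.continuous_mk' 1).measurable
    have h2 := Ef_meas ha (law f₀ Z)
    refine Measurable.prodMk ?_ ?_
    · exact (measurable_fst.comp h).add (h1.comp ((measurable_snd.comp h).const_mul τ))
    · exact (measurable_snd.comp h).add ((h2.comp (measurable_fst.comp h)).const_mul τ)⟩

def Zk {a : ℝ} (ha : 2 ≤ a) (f₀ : PM) (τ : ℝ) : ℕ → MM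
  | 0 => ⟨id, measurable_id⟩
  | k + 1 => stepZ ha f₀ τ (Zk ha f₀ τ k)

def muk {a : ℝ} (ha : 2 ≤ a) (f₀ : PM) (τ : ℝ) (k : ℕ) : PM := law f₀ (Zk ha f₀ τ k)

lemma muk_integral {a : ℝ} (ha : 2 ≤ a) (f₀ : PM) (τ : ℝ) (k : ℕ) {g : 𝕏 → ℝ} (hg : Measurable g) :
    ∫ p, g p ∂(muk ha f₀ τ k : Measure 𝕏) = ∫ ω, g ((Zk ha f₀ τ k).1 ω) ∂(f₀ : Measure 𝕏) := by
  unfold muk law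
  rw [ProbabilityMeasure.toMeasure_map]
  exact integral_map (Zk ha f₀ τ k).2.aemeasurable hg.aestronglyMeasurable

lemma muk_zero {a : ℝ} (ha : 2 ≤ a) (f₀ : PM) (τ : ℝ) : muk ha f₀ τ 0 = f₀ := by
  apply Subtype.ext
  change Measure.map id (f₀ : Measure 𝕏) = f₀
  exact Measure.map_id

lemma Zk_vel {a : ℝ} (ha : 2 ≤ a) (f₀ : PM) {τ : ℝ} (hτ : 0 ≤ τ) (k j : ℕ) (ω : 𝕏) :
    |((Zk ha f₀ τ (k + j)).1 ω).2 - ((Zk ha f₀ τ k).1 ω).2| ≤ CE a * (τ * j) := by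
  induction j with
  | zero => simp
  | succ j ih =>
    have h : ((Zk ha f₀ τ (k + (j + 1))).1 ω).2 = ((Zk ha f₀ τ (k + j)).1 ω).2
        + τ * Ef ha (muk ha f₀ τ (k + j)) ((Zk ha f₀ τ (k + j)).1 ω).1 := rfl
    rw [h]
    have hE := Ef_bdd ha (muk ha f₀ τ (k + j)) ((Zk ha f₀ τ (k + j)).1 ω).1
    rw [abs_le] at ih hE ⊢
    push_cast
    constructor <;> nlinarith [ih.1, ih.2, hE.1, hE.2]

lemma Zk_pos {a : ℝ} (ha : 2 ≤ a) (f₀ : PM) {τ : ℝ} (hτ : 0 ≤ τ) (k j : ℕ) (ω : 𝕏) :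
    ∃ d : ℝ, ((Zk ha f₀ τ (k + j)).1 ω).1 = ((Zk ha f₀ τ k).1 ω).1 + (d : 𝕋) ∧
      |d - (τ * j) * ((Zk ha f₀ τ k).1 ω).2| ≤ CE a * (τ * j) ^ 2 := by
  induction j with
  | zero => exact ⟨0, by simp, by simp⟩
  | succ j ih =>
    obtain ⟨d, hd, hb⟩ := ih
    have h : ((Zk ha f₀ τ (k + (j + 1))).1 ω).1 = ((Zk ha f₀ τ (k + j)).1 ω).1
        + ((τ * ((Zk ha f₀ τ (k + j)).1 ω).2 : ℝ) : 𝕋) := rfl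
    refine ⟨d + τ * ((Zk ha f₀ τ (k + j)).1 ω).2, ?_, ?_⟩
    · rw [h, hd, AddCircle.coe_add, add_assoc]
    · have hv := Zk_vel ha f₀ hτ k j ω
      have hC := CE_nonneg ha
      set w := ((Zk ha f₀ τ (k + j)).1 ω).2
      set v := ((Zk ha f₀ τ k).1 ω).2
      have e : d + τ * w - τ * ((j + 1 : ℕ) : ℝ) * v = (d - τ * j * v) + τ * (w - v) := by push_cast; ring
      rw [e]
      refine (abs_add_le _ _).trans ?_
      rw [abs_mul, abs_of_nonneg hτ]
      have h1 : τ * |w - v| ≤ τ * (CE a * (τ * j)) := by gcongr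
      have h2 : CE a * (τ * ((j+1:ℕ):ℝ))^2 = CE a * (τ * j)^2 + 2 * (τ * (CE a * (τ * j))) + CE a * τ^2 := by
        push_cast; ring
      rw [h2]
      have h3 : 0 ≤ τ * (CE a * (τ * j)) := by positivity
      have h4 : 0 ≤ CE a * τ^2 := by positivity
      linarith

lemma one_step {a : ℝ} (ha : 2 ≤ a) (f₀ : PM) {φ : ℝ × ℝ → ℝ} (hφ : TestFun φ) : ∃ C, 0 ≤ C ∧
    ∀ τ, 0 < τ → τ ≤ 1 → ∀ k,
      |(∫ p, tl φ p ∂(muk ha f₀ τ (k+1) : Measure 𝕏)) - (∫ p, tl φ p ∂(muk ha f₀ τ k : Measure 𝕏))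
        - τ * Bfun ha (psi1 φ) (psi2 φ) (muk ha f₀ τ k)| ≤ C * τ ^ 2 := by
  obtain ⟨C, hC, h⟩ := taylor_test hφ (CE a) (CE_nonneg ha)
  obtain ⟨c0, c1, c2, D, hD, b0, b1, b2⟩ := tf_basic hφ
  refine ⟨C, hC, fun τ hτ hτ1 k => ?_⟩
  have m0 := c0.measurable
  have mE := Ef_meas ha (muk ha f₀ τ k)
  have mB : Measurable fun p : 𝕏 => psi1 φ p + Ef ha (muk ha f₀ τ k) p.1 * psi2 φ p := by
    have := c1.measurable
    have := c2.measurable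
    fun_prop
  have bB : ∀ p : 𝕏, |psi1 φ p + Ef ha (muk ha f₀ τ k) p.1 * psi2 φ p| ≤ D + CE a * D := by
    intro p
    refine (abs_add_le _ _).trans (add_le_add (b1 p) ?_)
    rw [abs_mul]
    exact mul_le_mul (Ef_bdd ha _ _) (b2 p) (abs_nonneg _) (CE_nonneg ha)
  unfold Bfun
  rw [muk_integral ha f₀ τ (k+1) m0, muk_integral ha f₀ τ k m0, muk_integral ha f₀ τ k mB, ← integral_const_mul]
  have i1 : Integrable (fun ω => tl φ ((Zk ha f₀ τ (k+1)).1 ω)) (f₀ : Measure 𝕏) :=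
    integrable_of_bdd (m0.comp (Zk ha f₀ τ (k+1)).2) D fun ω => b0 _
  have i2 : Integrable (fun ω => tl φ ((Zk ha f₀ τ k).1 ω)) (f₀ : Measure 𝕏) :=
    integrable_of_bdd (m0.comp (Zk ha f₀ τ k).2) D fun ω => b0 _
  have i3 : Integrable (fun ω => τ * (psi1 φ ((Zk ha f₀ τ k).1 ω) + Ef ha (muk ha f₀ τ k) ((Zk ha f₀ τ k).1 ω).1 * psi2 φ ((Zk ha f₀ τ k).1 ω))) (f₀ : Measure 𝕏) :=
    (integrable_of_bdd (mB.comp (Zk ha f₀ τ k).2) (D + CE a * D) fun ω => bB _).const_mul τ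
  rw [← integral_sub i1 i2]
  have i12 : Integrable (fun ω => tl φ ((Zk ha f₀ τ (k+1)).1 ω) - tl φ ((Zk ha f₀ τ k).1 ω)) (f₀ : Measure 𝕏) := i1.sub i2
  rw [← integral_sub i12 i3]
  refine integral_abs_le_of_bdd _ fun ω => ?_
  exact h τ hτ hτ1 ((Zk ha f₀ τ k).1 ω) _ (Ef_bdd ha _ _)

/-! ### Lévy–Prokhorov estimates -/

def lpd (μ ν : PM) : ℝ := levyProkhorovDist (μ : Measure 𝕏) (ν : Measure 𝕏)

lemma lpd_eq (μ ν : PM) : lpd μ ν = dist (LevyProkhorov.probabilityMeasureHomeomorph (Ω := 𝕏) μ)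
    (LevyProkhorov.probabilityMeasureHomeomorph (Ω := 𝕏) ν) := rfl

lemma lpd_nonneg (μ ν : PM) : 0 ≤ lpd μ ν := by rw [lpd_eq]; exact dist_nonneg

lemma lpd_comm (μ ν : PM) : lpd μ ν = lpd ν μ := by rw [lpd_eq, lpd_eq, dist_comm]

lemma lpd_triangle (μ ν κ : PM) : lpd μ κ ≤ lpd μ ν + lpd ν κ := by
  rw [lpd_eq, lpd_eq, lpd_eq]; exact dist_triangle _ _ _

lemma lpd_tendsto {ι : Type*} {l : Filter ι} {u : ι → PM} {μ : PM} :
    Tendsto u l (𝓝 μ) ↔ Tendsto (fun i => lpd (u i) μ) l (𝓝 0) := by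
  simp only [lpd_eq]
  rw [← tendsto_iff_dist_tendsto_zero]
  exact (LevyProkhorov.probabilityMeasureHomeomorph (Ω := 𝕏)).isInducing.tendsto_nhds_iff

lemma law_apply (f₀ : PM) (Z : MM) {B : Set 𝕏} (hB : MeasurableSet B) :
    (law f₀ Z : Measure 𝕏) B = (f₀ : Measure 𝕏) (Z.1 ⁻¹' B) := by
  unfold law
  rw [ProbabilityMeasure.toMeasure_map]
  exact Measure.map_apply Z.2 hB

lemma lpd_law (f₀ : PM) (Z Z' : MM) {δ : ℝ} (hδ : 0 ≤ δ)
    (h : (f₀ : Measure 𝕏) {ω | δ ≤ dist (Z.1 ω) (Z'.1 ω)} ≤ ENNReal.ofReal δ) : lpd (law f₀ Z) (law f₀ Z') ≤ δ := by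
  refine levyProkhorovDist_le_of_forall_le _ _ hδ fun ε B hε hB => ?_
  rw [law_apply _ _ hB, law_apply _ _ Metric.isOpen_thickening.measurableSet]
  have hs : Z.1 ⁻¹' B ⊆ (Z'.1 ⁻¹' (Metric.thickening ε B)) ∪ {ω | δ ≤ dist (Z.1 ω) (Z'.1 ω)} := by
    intro ω hω
    by_cases hd : δ ≤ dist (Z.1 ω) (Z'.1 ω)
    · exact Or.inr hd
    · left
      push Not at hd
      rw [Set.mem_preimage, Metric.mem_thickening_iff]
      exact ⟨Z.1 ω, hω, by rw [dist_comm]; linarith⟩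
  refine (measure_mono hs).trans ((measure_union_le _ _).trans ?_)
  gcongr
  exact h.trans (ENNReal.ofReal_le_ofReal hε.le)

def m1 (f₀ : PM) : ℝ := ∫ p : 𝕏, |p.2| ∂(f₀ : Measure 𝕏)

lemma m1_nonneg (f₀ : PM) : 0 ≤ m1 f₀ := integral_nonneg fun _ => abs_nonneg _

lemma markov {f₀ : PM} (hm : Integrable (fun p : 𝕏 => |p.2|) (f₀ : Measure 𝕏)) {A c : ℝ} (hA : 0 ≤ A) (hc : 0 < c) :
    (f₀ : Measure 𝕏) {ω | c ≤ |ω.2| + A} ≤ ENNReal.ofReal ((m1 f₀ + A) / c) := by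
  have hi : Integrable (fun p : 𝕏 => |p.2| + A) (f₀ : Measure 𝕏) := hm.add (integrable_const A)
  have h := mul_meas_ge_le_integral_of_nonneg (μ := (f₀ : Measure 𝕏)) (f := fun p : 𝕏 => |p.2| + A)
    (Eventually.of_forall fun p => by positivity) hi c
  have e : ∫ p : 𝕏, (|p.2| + A) ∂(f₀ : Measure 𝕏) = m1 f₀ + A := by
    rw [integral_add hm (integrable_const A)]; simp [m1]
  rw [e] at h
  have h2 : (f₀ : Measure 𝕏).real {ω | c ≤ |ω.2| + A} ≤ (m1 f₀ + A) / c := by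
    rw [le_div_iff₀ hc, mul_comm]; exact h
  rw [← ENNReal.ofReal_toReal (measure_ne_top (f₀ : Measure 𝕏) {ω | c ≤ |ω.2| + A})]
  exact ENNReal.ofReal_le_ofReal h2

lemma Zk_dist {a : ℝ} (ha : 2 ≤ a) (f₀ : PM) {τ : ℝ} (hτ : 0 ≤ τ) (k j : ℕ) {T : ℝ} (hT : τ * (k + j) ≤ T) (ω : 𝕏) :
    dist ((Zk ha f₀ τ k).1 ω) ((Zk ha f₀ τ (k+j)).1 ω) ≤ (τ * j) * (|ω.2| + CE a * (T + 1)) := by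
  obtain ⟨d, hd, hb⟩ := Zk_pos ha f₀ hτ k j ω
  have hv := Zk_vel ha f₀ hτ k j ω
  have hv0 := Zk_vel ha f₀ hτ 0 k ω
  rw [zero_add] at hv0
  have hz : ((Zk ha f₀ τ 0).1 ω).2 = ω.2 := rfl
  rw [hz] at hv0
  have hC := CE_nonneg ha
  have hk : 0 ≤ τ * k := by positivity
  have hj : 0 ≤ τ * j := by positivity
  have hT0 : 0 ≤ T := by nlinarith
  rw [Prod.dist_eq, max_le_iff]
  constructor
  · rw [hd, dist_eq_norm, sub_add_cancel_left, norm_neg]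
    refine (torus_norm_coe_le d).trans ?_
    have h1 : |((Zk ha f₀ τ k).1 ω).2| ≤ |ω.2| + CE a * (τ * k) := by
      have := abs_add_le (((Zk ha f₀ τ k).1 ω).2 - ω.2) ω.2
      rw [sub_add_cancel] at this
      linarith
    have h2 : |d| ≤ CE a * (τ * j)^2 + (τ * j) * |((Zk ha f₀ τ k).1 ω).2| := by
      have := abs_add_le (d - (τ * j) * ((Zk ha f₀ τ k).1 ω).2) ((τ * j) * ((Zk ha f₀ τ k).1 ω).2)
      rw [sub_add_cancel, abs_mul, abs_of_nonneg hj] at this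
      linarith
    have h3 : (τ * j) * |((Zk ha f₀ τ k).1 ω).2| ≤ (τ * j) * (|ω.2| + CE a * (τ * k)) := by gcongr
    have h4 : CE a * (τ * j)^2 + (τ * j) * (|ω.2| + CE a * (τ * k)) = (τ * j) * (|ω.2| + CE a * (τ * (k + j))) := by ring
    have h5 : (τ * j) * (|ω.2| + CE a * (τ * (k + j))) ≤ (τ * j) * (|ω.2| + CE a * (T + 1)) := by
      gcongr; linarith
    linarith
  · rw [Real.dist_eq, abs_sub_comm]
    refine hv.trans ?_
    have : 0 ≤ τ * j * |ω.2| + (τ * j) * (CE a * T) := by positivity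
    nlinarith

lemma lpd_muk {a : ℝ} (ha : 2 ≤ a) {f₀ : PM} (hm : Integrable (fun p : 𝕏 => |p.2|) (f₀ : Measure 𝕏))
    {τ : ℝ} (hτ : 0 ≤ τ) (k j : ℕ) {T : ℝ} (hT : τ * (k + j) ≤ T) :
    lpd (muk ha f₀ τ k) (muk ha f₀ τ (k + j)) ≤ √((τ * j) * (m1 f₀ + CE a * (T + 1))) := by
  have hC := CE_nonneg ha
  have hm1 := m1_nonneg f₀
  have hk : 0 ≤ τ * k := by positivity
  have hj : 0 ≤ τ * j := by positivity
  have hT0 : 0 ≤ T := by nlinarith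
  set A := CE a * (T + 1) with hA
  have hA0 : 0 ≤ A := by positivity
  set δ := √((τ * j) * (m1 f₀ + A)) with hδ
  have hδ0 : 0 ≤ δ := Real.sqrt_nonneg _
  have hsq : δ * δ = (τ * j) * (m1 f₀ + A) := Real.mul_self_sqrt (by positivity)
  have hd := fun ω => Zk_dist ha f₀ hτ k j hT ω
  rw [← hA] at hd
  rcases hj.eq_or_lt with h0 | hpos
  · -- no time elapsed
    have hz : ∀ ω, dist ((Zk ha f₀ τ k).1 ω) ((Zk ha f₀ τ (k+j)).1 ω) = 0 := by
      intro ω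
      have := hd ω
      rw [← h0, zero_mul] at this
      exact le_antisymm this dist_nonneg
    have heq : Zk ha f₀ τ k = Zk ha f₀ τ (k + j) := by
      apply Subtype.ext; funext ω; exact dist_eq_zero.1 (hz ω)
    unfold muk
    rw [← heq, lpd_eq, dist_self]; exact hδ0
  · rcases hδ0.eq_or_lt with h0 | hδpos
    · -- then everything is at rest
      refine lpd_law f₀ _ _ hδ0 ?_
      have hz : m1 f₀ = 0 ∧ A = 0 := by
        rw [← h0] at hsq
        have : m1 f₀ + A = 0 := by
          have := hsq.symm
          rcases mul_eq_zero.1 (by linarith : (τ * j) * (m1 f₀ + A) = 0) with h | h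
          · linarith
          · exact h
        constructor <;> linarith
      have hC0 : CE a = 0 := by
        have := hz.2
        rw [hA] at this
        rcases mul_eq_zero.1 this with h | h
        · exact h
        · linarith
      exfalso
      have : 0 < CE a := by
        unfold CE
        have := Hb_nonneg a
        positivity
      linarith
    · refine lpd_law f₀ _ _ hδ0 ?_
      have hs : {ω | δ ≤ dist ((Zk ha f₀ τ k).1 ω) ((Zk ha f₀ τ (k+j)).1 ω)} ⊆ {ω : 𝕏 | δ / (τ * j) ≤ |ω.2| + A} := by
        intro ω hω
        have h1 : δ ≤ dist ((Zk ha f₀ τ k).1 ω) ((Zk ha f₀ τ (k+j)).1 ω) := hω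
        have h2 := h1.trans (hd ω)
        change δ / (τ * j) ≤ |ω.2| + A
        rw [div_le_iff₀ hpos]; linarith
      refine (measure_mono hs).trans ((markov hm hA0 (by positivity)).trans ?_)
      apply ENNReal.ofReal_le_ofReal
      rw [div_div_eq_mul_div, div_le_iff₀ hδpos]
      linarith

/-! ### Time interpolation -/

def tn (n : ℕ) : ℝ := 1 / ((n:ℝ) + 1)
def kn (n : ℕ) (t : ℝ) : ℕ := ⌊t * ((n:ℝ) + 1)⌋₊

lemma tn_pos (n : ℕ) : 0 < tn n := by unfold tn; positivity
lemma tn_le (n : ℕ) : tn n ≤ 1 := by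
  unfold tn
  rw [div_le_one (by positivity)]
  have : (0:ℝ) ≤ n := Nat.cast_nonneg n
  linarith

lemma tn_mul (n : ℕ) : tn n * ((n:ℝ) + 1) = 1 := by unfold tn; field_simp

lemma kn_le (n : ℕ) {t : ℝ} (ht : 0 ≤ t) : tn n * kn n t ≤ t := by
  have h := Nat.floor_le (a := t * ((n:ℝ) + 1)) (by positivity)
  have h2 : tn n * kn n t ≤ tn n * (t * ((n:ℝ)+1)) := mul_le_mul_of_nonneg_left h (tn_pos n).le
  have := tn_mul n
  calc _ ≤ _ := h2
    _ = t * (tn n * ((n:ℝ)+1)) := by ring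
    _ = t := by rw [this, mul_one]

lemma kn_gt (n : ℕ) (t : ℝ) : t - tn n < tn n * kn n t := by
  have h := Nat.lt_floor_add_one (t * ((n:ℝ) + 1))
  have h2 : tn n * (t * ((n:ℝ)+1)) < tn n * (kn n t + 1) := mul_lt_mul_of_pos_left h (tn_pos n)
  have := tn_mul n
  have e : tn n * (t * ((n:ℝ)+1)) = t := by
    calc _ = t * (tn n * ((n:ℝ)+1)) := by ring
      _ = t := by rw [this, mul_one]
  rw [e] at h2
  linarith

lemma kn_mono (n : ℕ) {s t : ℝ} (h : s ≤ t) : kn n s ≤ kn n t := by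
  unfold kn
  apply Nat.floor_mono
  gcongr

lemma kn_neg (n : ℕ) {t : ℝ} (h : t ≤ 0) : kn n t = 0 := by
  unfold kn
  apply Nat.floor_of_nonpos
  have : (0:ℝ) ≤ (n:ℝ) + 1 := by positivity
  nlinarith

lemma kn_grid (n i : ℕ) : kn n (tn n * i) = i := by
  unfold kn
  have : tn n * i * ((n:ℝ)+1) = i := by
    have := tn_mul n
    calc _ = i * (tn n * ((n:ℝ)+1)) := by ring
      _ = i := by rw [this, mul_one]
  rw [this]; exact Nat.floor_natCast i

lemma tn_tendsto : Tendsto tn atTop (𝓝 0) := tendsto_one_div_add_atTop_nhds_zero_nat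

lemma kn_tendsto {t : ℝ} (ht : 0 ≤ t) : Tendsto (fun n => tn n * kn n t) atTop (𝓝 t) := by
  have h : Tendsto (fun n => t - tn n) atTop (𝓝 t) := by simpa using tn_tendsto.const_sub t
  exact tendsto_of_tendsto_of_tendsto_of_le_of_le h tendsto_const_nhds (fun n => (kn_gt n t).le) (fun n => kn_le n ht)

def mun {a : ℝ} (ha : 2 ≤ a) (f₀ : PM) (n : ℕ) (t : ℝ) : PM := muk ha f₀ (tn n) (kn n t)

lemma mun_lp_aux {a : ℝ} (ha : 2 ≤ a) {f₀ : PM} (hm : Integrable (fun p : 𝕏 => |p.2|) (f₀ : Measure 𝕏))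
    (n : ℕ) {s t T : ℝ} (hst : s ≤ t) (htT : t ≤ T) (hT : 0 ≤ T) :
    lpd (mun ha f₀ n s) (mun ha f₀ n t) ≤ √((t - s + tn n) * (m1 f₀ + CE a * (T + 1))) := by
  obtain ⟨j, hj⟩ := Nat.exists_eq_add_of_le (kn_mono n hst)
  unfold mun
  rw [hj]
  have hτ := tn_pos n
  have hb : tn n * (kn n s + j) ≤ T := by
    have : tn n * ((kn n t : ℕ) : ℝ) ≤ T := by
      rcases le_total 0 t with h | h
      · exact (kn_le n h).trans htT
      · rw [kn_neg n h]; simpa using hT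
    rw [hj] at this
    push_cast at this; exact this
  refine (lpd_muk ha hm hτ.le _ _ hb).trans ?_
  apply Real.sqrt_le_sqrt
  have hC := CE_nonneg ha
  have hm1 := m1_nonneg f₀
  gcongr
  rcases le_total 0 t with h | h
  · have h1 := kn_le n h
    have h2 := kn_gt n s
    rw [hj] at h1
    push_cast at h1
    nlinarith
  · have h1 := kn_neg n h
    have : j = 0 := by omega
    subst this
    simp; linarith

lemma mun_lp {a : ℝ} (ha : 2 ≤ a) {f₀ : PM} (hm : Integrable (fun p : 𝕏 => |p.2|) (f₀ : Measure 𝕏))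
    (n : ℕ) {s t T : ℝ} (hsT : s ≤ T) (htT : t ≤ T) (hT : 0 ≤ T) :
    lpd (mun ha f₀ n s) (mun ha f₀ n t) ≤ √((|t - s| + tn n) * (m1 f₀ + CE a * (T + 1))) := by
  rcases le_total s t with h | h
  · rw [abs_of_nonneg (by linarith)]; exact mun_lp_aux ha hm n h htT hT
  · rw [lpd_comm, abs_sub_comm, abs_of_nonneg (by linarith)]; exact mun_lp_aux ha hm n h hsT hT

lemma mun_vel {a : ℝ} (ha : 2 ≤ a) (f₀ : PM) (n : ℕ) {t T : ℝ} (htT : t ≤ T) (hT : 0 ≤ T) (ω : 𝕏) :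
    |((Zk ha f₀ (tn n) (kn n t)).1 ω).2| ≤ |ω.2| + CE a * T := by
  have hv0 := Zk_vel ha f₀ (tn_pos n).le 0 (kn n t) ω
  rw [zero_add] at hv0
  have hz : ((Zk ha f₀ (tn n) 0).1 ω).2 = ω.2 := rfl
  rw [hz] at hv0
  have hC := CE_nonneg ha
  have hk : tn n * kn n t ≤ T := by
    rcases le_total 0 t with h | h
    · exact (kn_le n h).trans htT
    · rw [kn_neg n h]; simpa using hT
  have := abs_add_le (((Zk ha f₀ (tn n) (kn n t)).1 ω).2 - ω.2) ω.2
  rw [sub_add_cancel] at this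
  have : CE a * (tn n * kn n t) ≤ CE a * T := by gcongr
  linarith

/-! ### The limit -/

abbrev 𝒰 : Ultrafilter ℕ := hyperfilter ℕ

lemma u_le : (𝒰 : Filter ℕ) ≤ atTop := Nat.hyperfilter_le_atTop

lemma exists_limit {a : ℝ} (ha : 2 ≤ a) {f₀ : PM} (hm : Integrable (fun p : 𝕏 => |p.2|) (f₀ : Measure 𝕏)) (t : ℝ) :
    ∃ f : PM, Tendsto (fun n => mun ha f₀ n t) 𝒰 (𝓝 f) := by
  set S : Set PM := Set.range fun n => mun ha f₀ n t with hS
  have tight : IsTightMeasureSet {x | ∃ μ ∈ S, (μ : Measure 𝕏) = x} := by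
    rw [isTightMeasureSet_iff_exists_isCompact_measure_compl_le]
    intro ε hε
    have hC := CE_nonneg ha
    set A := CE a * |t| with hA
    have hA0 : 0 ≤ A := by positivity
    have hm1 := m1_nonneg f₀
    obtain ⟨M, hM0, hM⟩ : ∃ M : ℝ, 0 < M ∧ ENNReal.ofReal ((m1 f₀ + A) / M) ≤ ε := by
      have ht : Tendsto (fun M : ℝ => ENNReal.ofReal ((m1 f₀ + A) / M)) atTop (𝓝 0) := by
        have := ENNReal.tendsto_ofReal (tendsto_const_nhds (x := m1 f₀ + A).div_atTop (tendsto_id (α := ℝ) (x := atTop)))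
        simpa using this
      obtain ⟨M, h1, h2⟩ := ((ht.eventually (ge_mem_nhds hε)).and (eventually_gt_atTop 0)).exists
      exact ⟨M, h2, h1⟩
    refine ⟨Set.univ ×ˢ Metric.closedBall (0:ℝ) M, isCompact_univ.prod (isCompact_closedBall _ _), ?_⟩
    rintro _ ⟨_, ⟨n, rfl⟩, rfl⟩
    have hmeas : MeasurableSet ((Set.univ : Set 𝕋) ×ˢ Metric.closedBall (0:ℝ) M)ᶜ :=
      (MeasurableSet.univ.prod Metric.isClosed_closedBall.measurableSet).compl
    have e := law_apply f₀ (Zk ha f₀ (tn n) (kn n t)) hmeas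
    change (law f₀ (Zk ha f₀ (tn n) (kn n t)) : Measure 𝕏) _ ≤ ε
    rw [e]
    refine (measure_mono ?_).trans ((markov hm hA0 hM0).trans hM)
    intro ω hω
    have h1 := mun_vel ha f₀ n (le_abs_self t) (abs_nonneg t) ω
    simp only [Set.mem_preimage, Set.mem_compl_iff, Set.mem_prod, Set.mem_univ, true_and, Metric.mem_closedBall,
      dist_zero_right, Real.norm_eq_abs, not_le] at hω
    change M ≤ |ω.2| + A
    linarith
  have hc := isCompact_closure_of_isTightMeasureSet tight
  obtain ⟨f, -, hf⟩ := hc.ultrafilter_le_nhds (Ultrafilter.map (fun n => mun ha f₀ n t) 𝒰) (by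
    rw [le_principal_iff, Ultrafilter.coe_map, Filter.mem_map]
    exact Filter.univ_mem' fun n => subset_closure ⟨n, rfl⟩)
  exact ⟨f, hf⟩

def fl {a : ℝ} (ha : 2 ≤ a) {f₀ : PM} (hm : Integrable (fun p : 𝕏 => |p.2|) (f₀ : Measure 𝕏)) (t : ℝ) : PM :=
  (exists_limit ha hm t).choose

lemma fl_tendsto {a : ℝ} (ha : 2 ≤ a) {f₀ : PM} (hm : Integrable (fun p : 𝕏 => |p.2|) (f₀ : Measure 𝕏)) (t : ℝ) :
    Tendsto (fun n => mun ha f₀ n t) 𝒰 (𝓝 (fl ha hm t)) := (exists_limit ha hm t).choose_spec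

lemma fl_zero {a : ℝ} (ha : 2 ≤ a) {f₀ : PM} (hm : Integrable (fun p : 𝕏 => |p.2|) (f₀ : Measure 𝕏)) :
    fl ha hm 0 = f₀ := by
  have h := fl_tendsto ha hm 0
  have e : (fun n => mun ha f₀ n 0) = fun _ => f₀ := by
    funext n
    unfold mun
    rw [kn_neg n le_rfl, muk_zero]
  rw [e] at h
  exact tendsto_nhds_unique h tendsto_const_nhds |>.symm ▸ rfl

lemma fl_joint {a : ℝ} (ha : 2 ≤ a) {f₀ : PM} (hm : Integrable (fun p : 𝕏 => |p.2|) (f₀ : Measure 𝕏)) (t : ℝ) :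
    Tendsto (fun q : ℕ × ℝ => mun ha f₀ q.1 q.2) ((𝒰 : Filter ℕ) ×ˢ 𝓝 t) (𝓝 (fl ha hm t)) := by
  rw [lpd_tendsto]
  have h1 : Tendsto (fun n => lpd (mun ha f₀ n t) (fl ha hm t)) 𝒰 (𝓝 0) := lpd_tendsto.1 (fl_tendsto ha hm t)
  have h2 : Tendsto (fun q : ℕ × ℝ => √((|t - q.2| + tn q.1) * (m1 f₀ + CE a * (|t| + 1 + 1)))) ((𝒰 : Filter ℕ) ×ˢ 𝓝 t) (𝓝 0) := by
    have hn : Tendsto (fun q : ℕ × ℝ => tn q.1) ((𝒰 : Filter ℕ) ×ˢ 𝓝 t) (𝓝 0) := (tn_tendsto.mono_left u_le).comp tendsto_fst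
    have hs : Tendsto (fun q : ℕ × ℝ => q.2) ((𝒰 : Filter ℕ) ×ˢ 𝓝 t) (𝓝 t) := tendsto_snd
    have := (((hs.const_sub t).abs.add hn).mul_const (m1 f₀ + CE a * (|t| + 1 + 1))).sqrt
    simpa using this
  have h3 := h2.add (h1.comp (tendsto_fst (f := (𝒰 : Filter ℕ)) (g := 𝓝 t)))
  rw [add_zero] at h3
  refine tendsto_of_tendsto_of_tendsto_of_le_of_le' tendsto_const_nhds h3 (Eventually.of_forall fun q => lpd_nonneg _ _) ?_
  have h4 : ∀ᶠ q : ℕ × ℝ in (𝒰 : Filter ℕ) ×ˢ 𝓝 t, q.2 < |t| + 1 := by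
    have : ∀ᶠ s in 𝓝 t, s < |t| + 1 := gt_mem_nhds (by linarith [le_abs_self t])
    exact tendsto_snd.eventually this
  filter_upwards [h4] with q hq
  refine (lpd_triangle _ (mun ha f₀ q.1 t) _).trans ?_
  have := mun_lp ha hm q.1 (s := q.2) (t := t) (T := |t| + 1) hq.le (by linarith [le_abs_self t]) (by positivity)
  simp only [Function.comp]
  linarith

lemma fl_cont {a : ℝ} (ha : 2 ≤ a) {f₀ : PM} (hm : Integrable (fun p : 𝕏 => |p.2|) (f₀ : Measure 𝕏))
    {g : 𝕏 → ℝ} (hg : Continuous g) {C : ℝ} (hC : ∀ p, |g p| ≤ C) :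
    Continuous fun t => ∫ p, g p ∂(fl ha hm t : Measure 𝕏) := by
  have cg := cont_integral g hg C hC
  rw [continuous_iff_continuousAt]
  intro t
  rw [Metric.continuousAt_iff']
  intro e he
  have h1 := (cg.tendsto (fl ha hm t)).comp (fl_joint ha hm t)
  have h2 := Metric.tendsto_nhds.1 h1 (e/2) (by linarith)
  rw [Filter.eventually_prod_iff] at h2
  obtain ⟨pa, hpa, pb, hpb, h⟩ := h2
  filter_upwards [hpb] with s hs
  have h3 : Tendsto (fun n => dist (∫ p, g p ∂(mun ha f₀ n s : Measure 𝕏)) (∫ p, g p ∂(fl ha hm t : Measure 𝕏))) 𝒰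
      (𝓝 (dist (∫ p, g p ∂(fl ha hm s : Measure 𝕏)) (∫ p, g p ∂(fl ha hm t : Measure 𝕏)))) :=
    ((cg.tendsto (fl ha hm s)).comp (fl_tendsto ha hm s)).dist tendsto_const_nhds
  have h4 := le_of_tendsto h3 (b := e/2) (hpa.mono fun n hn => (h hn hs).le)
  linarith

lemma fl_moment {a : ℝ} (ha : 2 ≤ a) {f₀ : PM} (hm : Integrable (fun p : 𝕏 => |p.2|) (f₀ : Measure 𝕏)) (t : ℝ) :
    Integrable (fun p : 𝕏 => |p.2|) (fl ha hm t : Measure 𝕏) := by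
  have hC := CE_nonneg ha
  set A := CE a * |t| with hA
  have hA0 : 0 ≤ A := by positivity
  have hm1 := m1_nonneg f₀
  have cM : ∀ M : ℕ, Continuous fun p : 𝕏 => min |p.2| (M:ℝ) := fun M => by fun_prop
  have bM : ∀ M : ℕ, ∀ p : 𝕏, |min |p.2| (M:ℝ)| ≤ M := fun M p => by
    rw [abs_of_nonneg (le_min (abs_nonneg _) (Nat.cast_nonneg M))]; exact min_le_right _ _
  have h1 : ∀ M : ℕ, ∫ p : 𝕏, min |p.2| (M:ℝ) ∂(fl ha hm t : Measure 𝕏) ≤ m1 f₀ + A := by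
    intro M
    have hl := ((cont_integral _ (cM M) M (bM M)).tendsto (fl ha hm t)).comp (fl_tendsto ha hm t)
    refine le_of_tendsto hl (Eventually.of_forall fun n => ?_)
    simp only [Function.comp]
    unfold mun
    rw [muk_integral ha f₀ _ _ (cM M).measurable]
    have e : ∫ p : 𝕏, (|p.2| + A) ∂(f₀ : Measure 𝕏) = m1 f₀ + A := by
      rw [integral_add hm (integrable_const A)]; simp [m1]
    rw [← e]
    refine integral_mono (integrable_of_bdd ((cM M).measurable.comp (Zk ha f₀ (tn n) (kn n t)).2) M fun ω => bM M _)
      (hm.add (integrable_const A)) fun ω => ?_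
    exact (min_le_left _ _).trans (mun_vel ha f₀ n (le_abs_self t) (abs_nonneg t) ω)
  refine ⟨by apply Continuous.aestronglyMeasurable; fun_prop, ?_⟩
  rw [hasFiniteIntegral_iff_norm]
  have h2 : Tendsto (fun M : ℕ => ∫⁻ p : 𝕏, ENNReal.ofReal (min |p.2| (M:ℝ)) ∂(fl ha hm t : Measure 𝕏)) atTop
      (𝓝 (∫⁻ p : 𝕏, ENNReal.ofReal ‖|p.2|‖ ∂(fl ha hm t : Measure 𝕏))) := by
    refine lintegral_tendsto_of_tendsto_of_monotone (fun M => ((cM M).measurable.ennreal_ofReal).aemeasurable)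
      (Eventually.of_forall fun p => ?_) (Eventually.of_forall fun p => ?_)
    · intro M N hMN
      have : (M:ℝ) ≤ N := by exact_mod_cast hMN
      apply ENNReal.ofReal_le_ofReal
      exact min_le_min_left _ this
    · refine tendsto_const_nhds.congr' ?_
      obtain ⟨N, hN⟩ := exists_nat_gt |p.2|
      filter_upwards [eventually_ge_atTop N] with M hM
      have : (N:ℝ) ≤ M := by exact_mod_cast hM
      rw [min_eq_left (by linarith)]; simp
  refine lt_of_le_of_lt (le_of_tendsto h2 (b := ENNReal.ofReal (m1 f₀ + A)) (Eventually.of_forall fun M => ?_)) ENNReal.ofReal_lt_top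
  rw [← ofReal_integral_eq_lintegral_ofReal (integrable_of_cont_bdd (cM M) M (bM M)) (Eventually.of_forall fun p => le_min (abs_nonneg _) (Nat.cast_nonneg M))]
  exact ENNReal.ofReal_le_ofReal (h1 M)

/-! ### Averaging in time -/

lemma sum_steps {a : ℝ} (ha : 2 ≤ a) (f₀ : PM) {φ : ℝ × ℝ → ℝ} {C τ b e : ℝ} (hτ : 0 < τ)
    (hC : ∀ k, |(∫ p, tl φ p ∂(muk ha f₀ τ (k+1) : Measure 𝕏)) - (∫ p, tl φ p ∂(muk ha f₀ τ k : Measure 𝕏))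
        - τ * Bfun ha (psi1 φ) (psi2 φ) (muk ha f₀ τ k)| ≤ C * τ ^ 2) (k j : ℕ)
    (hb : ∀ i < j, |Bfun ha (psi1 φ) (psi2 φ) (muk ha f₀ τ (k + i)) - b| ≤ e) :
    |(∫ p, tl φ p ∂(muk ha f₀ τ (k+j) : Measure 𝕏)) - (∫ p, tl φ p ∂(muk ha f₀ τ k : Measure 𝕏))
        - (τ * j) * b| ≤ (τ * j) * (e + C * τ) := by
  induction j with
  | zero => simp
  | succ j ih =>
    have h1 := ih fun i hi => hb i (by omega)
    have h2 := hC (k + j)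
    have h3 := hb j (by omega)
    have h4 : |τ * (Bfun ha (psi1 φ) (psi2 φ) (muk ha f₀ τ (k + j)) - b)| ≤ τ * e := by
      rw [abs_mul, abs_of_pos hτ]; gcongr
    rw [show k + (j + 1) = k + j + 1 by ring]
    rw [abs_le] at h1 h2 h4 ⊢
    push_cast
    constructor <;> nlinarith [h1.1, h1.2, h2.1, h2.2, h4.1, h4.2]

lemma avg {a : ℝ} (ha : 2 ≤ a) {f₀ : PM} (hm : Integrable (fun p : 𝕏 => |p.2|) (f₀ : Measure 𝕏))
    {φ : ℝ × ℝ → ℝ} (hφ : TestFun φ) {b e s t δ : ℝ} (hs : 0 ≤ s) (hst : s ≤ t) (hδ : 0 < δ)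
    (h : ∀ᶠ n in (𝒰 : Filter ℕ), ∀ r, s - δ ≤ r → r ≤ t → |Bfun ha (psi1 φ) (psi2 φ) (mun ha f₀ n r) - b| ≤ e) :
    |(∫ p, tl φ p ∂(fl ha hm t : Measure 𝕏)) - (∫ p, tl φ p ∂(fl ha hm s : Measure 𝕏)) - (t - s) * b| ≤ (t - s) * e := by
  obtain ⟨c0, c1, c2, D, hD, b0, b1, b2⟩ := tf_basic hφ
  obtain ⟨C, hC, hone⟩ := one_step ha f₀ hφ
  have ct := cont_integral (tl φ) c0 D b0
  have ht : 0 ≤ t := hs.trans hst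
  have l1 := (ct.tendsto (fl ha hm t)).comp (fl_tendsto ha hm t)
  have l2 := (ct.tendsto (fl ha hm s)).comp (fl_tendsto ha hm s)
  have l3 : Tendsto (fun n => tn n * kn n t - tn n * kn n s) 𝒰 (𝓝 (t - s)) :=
    ((kn_tendsto ht).sub (kn_tendsto hs)).mono_left u_le
  have l4 : Tendsto (fun n => e + C * tn n) 𝒰 (𝓝 e) := by
    have := ((tn_tendsto.mono_left u_le).const_mul C).const_add e
    simpa using this
  have L1 := ((l1.sub l2).sub (l3.mul_const b)).abs
  have L2 := l3.mul l4
  refine le_of_tendsto_of_tendsto L1 L2 ?_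
  have hsm : ∀ᶠ n in (𝒰 : Filter ℕ), tn n < δ := (tn_tendsto.mono_left u_le).eventually (gt_mem_nhds hδ)
  filter_upwards [h, hsm] with n hn hnδ
  obtain ⟨j, hj⟩ := Nat.exists_eq_add_of_le (kn_mono n hst)
  have hτ := tn_pos n
  have hjj : tn n * kn n t - tn n * kn n s = tn n * j := by
    rw [hj]; push_cast; ring
  simp only [Function.comp, hjj]
  unfold mun
  rw [hj]
  refine sum_steps ha f₀ hτ (hone (tn n) hτ (tn_le n)) (kn n s) j fun i hi => ?_
  have hr := hn (tn n * ((kn n s + i : ℕ) : ℝ)) ?_ ?_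
  · unfold mun at hr
    rwa [kn_grid] at hr
  · have := kn_gt n s
    push_cast
    have : 0 ≤ tn n * i := by positivity
    nlinarith
  · have h5 := kn_le n ht
    refine le_trans ?_ h5
    rw [hj]
    gcongr

lemma F_lip {a : ℝ} (ha : 2 ≤ a) {f₀ : PM} (hm : Integrable (fun p : 𝕏 => |p.2|) (f₀ : Measure 𝕏))
    {φ : ℝ × ℝ → ℝ} (hφ : TestFun φ) : ∃ K : NNReal, LipschitzOnWith K
      (fun s => ∫ p, tl φ p ∂(fl ha hm s : Measure 𝕏)) (Set.Ici 0) := by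
  obtain ⟨c0, c1, c2, D, hD, b0, b1, b2⟩ := tf_basic hφ
  have hC := CE_nonneg ha
  have hK : 0 ≤ D + CE a * D := by positivity
  refine ⟨⟨D + CE a * D, hK⟩, LipschitzOnWith.of_dist_le_mul ?_⟩
  have key : ∀ s t : ℝ, 0 ≤ s → s ≤ t → |(∫ p, tl φ p ∂(fl ha hm t : Measure 𝕏)) - (∫ p, tl φ p ∂(fl ha hm s : Measure 𝕏))| ≤ (D + CE a * D) * |t - s| := by
    intro s t hs hst
    have := avg ha hm hφ (b := 0) (e := D + CE a * D) hs hst one_pos (Eventually.of_forall fun n r _ _ => by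
      rw [sub_zero]; exact Bfun_bdd ha b1 b2 _)
    rw [mul_zero, sub_zero] at this
    rw [abs_of_nonneg (by linarith : 0 ≤ t - s)]
    linarith
  intro s hs t ht
  rw [Real.dist_eq, Real.dist_eq]
  rcases le_total s t with h | h
  · rw [abs_sub_comm, abs_sub_comm s t]; exact key s t hs h
  · exact key t s ht h

lemma F_deriv {a : ℝ} (ha : 2 ≤ a) {f₀ : PM} (hm : Integrable (fun p : 𝕏 => |p.2|) (f₀ : Measure 𝕏))
    {φ : ℝ × ℝ → ℝ} (hφ : TestFun φ) {t : ℝ} (ht : 0 ≤ t) (hg : Good (fl ha hm t)) :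
    HasDerivWithinAt (fun s => ∫ p, tl φ p ∂(fl ha hm s : Measure 𝕏))
      (Bfun ha (psi1 φ) (psi2 φ) (fl ha hm t)) (Set.Ici 0) t := by
  obtain ⟨c0, c1, c2, D, hD, b0, b1, b2⟩ := tf_basic hφ
  have cB := B_cont ha hg c1 c2 b1 b2
  rw [hasDerivWithinAt_iff_isLittleO, Asymptotics.isLittleO_iff]
  intro e he
  have h1 := cB.tendsto.comp (fl_joint ha hm t)
  have h2 := Metric.tendsto_nhds.1 h1 e he
  rw [Filter.eventually_prod_iff] at h2
  obtain ⟨pa, hpa, pb, hpb, h⟩ := h2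
  obtain ⟨δ, hδ, hball⟩ := Metric.eventually_nhds_iff.1 hpb
  have hev : ∀ᶠ s in 𝓝[Set.Ici 0] t, s ∈ Metric.ball t (δ/2) ∧ s ∈ Set.Ici (0:ℝ) :=
    (eventually_nhdsWithin_of_eventually_nhds (Metric.ball_mem_nhds t (by linarith))).and self_mem_nhdsWithin
  filter_upwards [hev] with s hs
  obtain ⟨hs1, hs2⟩ := hs
  rw [Metric.mem_ball, Real.dist_eq, abs_lt] at hs1
  have hs0 : 0 ≤ s := hs2
  have hcond : ∀ u v : ℝ, t - δ/2 < u → v < t + δ/2 → ∀ᶠ n in (𝒰 : Filter ℕ), ∀ r, u - δ/2 ≤ r → r ≤ v →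
      |Bfun ha (psi1 φ) (psi2 φ) (mun ha f₀ n r) - Bfun ha (psi1 φ) (psi2 φ) (fl ha hm t)| ≤ e := by
    intro u v hu hv
    refine hpa.mono fun n hn r hr1 hr2 => ?_
    have hd : dist r t < δ := by
      rw [Real.dist_eq, abs_lt]; constructor <;> linarith
    exact (h hn (hball hd)).le
  rw [Real.norm_eq_abs, Real.norm_eq_abs, smul_eq_mul]
  rcases le_total s t with hst | hst
  · have := avg ha hm hφ hs0 hst (half_pos hδ) (hcond s t (by linarith [hs1.1]) (by linarith))
    rw [abs_sub_comm s t, abs_of_nonneg (by linarith : 0 ≤ t - s)]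
    rw [abs_le] at this ⊢
    constructor <;> nlinarith [this.1, this.2]
  · have := avg ha hm hφ ht hst (half_pos hδ) (hcond t s (by linarith) (by linarith [hs1.2]))
    rw [abs_of_nonneg (by linarith : 0 ≤ s - t)]
    rw [abs_le] at this ⊢
    constructor <;> nlinarith [this.1, this.2]

/-! ### Bad times are countable -/

def badO (η δ R : ℝ) : Set (𝕏 × 𝕏) := {z | ‖z.1.1 - z.2.1‖ < η ∧ δ < |z.1.2 - z.2.2| ∧ |z.1.2 - z.2.2| < R}
def badS (δ R : ℝ) : Set (𝕏 × 𝕏) := {z | z.1.1 = z.2.1 ∧ δ < |z.1.2 - z.2.2| ∧ |z.1.2 - z.2.2| < R}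

lemma badO_open (η δ R : ℝ) : IsOpen (badO η δ R) := by
  have h1 : IsOpen {z : 𝕏 × 𝕏 | ‖z.1.1 - z.2.1‖ < η} := isOpen_lt (by fun_prop) continuous_const
  have h2 : IsOpen {z : 𝕏 × 𝕏 | δ < |z.1.2 - z.2.2|} := isOpen_lt continuous_const (by fun_prop)
  have h3 : IsOpen {z : 𝕏 × 𝕏 | |z.1.2 - z.2.2| < R} := isOpen_lt (by fun_prop) continuous_const
  exact h1.inter (h2.inter h3)

lemma badS_sub {η δ R : ℝ} (hη : 0 < η) : badS δ R ⊆ badO η δ R := by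
  rintro z ⟨h1, h2⟩
  exact ⟨by rw [h1, sub_self, norm_zero]; exact hη, h2⟩

def mass2 (μ : PM) (S : Set (𝕏 × 𝕏)) : ENNReal := ((μ : Measure 𝕏).prod (μ : Measure 𝕏)) S

lemma separate {a : ℝ} (ha : 2 ≤ a) (f₀ : PM) {τ : ℝ} (hτ : 0 ≤ τ) (k j : ℕ) {δ R η θ g : ℝ}
    (hδ : 0 < δ) (hR : 0 < R) (h1 : 4 * CE a * θ ≤ δ) (h2 : θ * (R + δ) ≤ 1/2)
    (hj : τ * j ≤ θ) (hg : g ≤ τ * j) (hη : 4 * η ≤ g * δ) (p q : 𝕏)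
    (hk : ((Zk ha f₀ τ k).1 p, (Zk ha f₀ τ k).1 q) ∈ badO η δ R)
    (hl : ((Zk ha f₀ τ (k + j)).1 p, (Zk ha f₀ τ (k + j)).1 q) ∈ badO η δ R) : False := by
  obtain ⟨d, hd, hdb⟩ := Zk_pos ha f₀ hτ k j p
  obtain ⟨d', hd', hdb'⟩ := Zk_pos ha f₀ hτ k j q
  obtain ⟨k1, k2, k3⟩ := hk
  obtain ⟨l1, -, -⟩ := hl
  simp only at k1 k2 k3 l1
  have hC := CE_nonneg ha
  have hh : 0 ≤ τ * j := by positivity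
  set H := τ * j
  set v := ((Zk ha f₀ τ k).1 p).2
  set w := ((Zk ha f₀ τ k).1 q).2
  have e1 : |(d - d') - H * (v - w)| ≤ 2 * CE a * H^2 := by
    rw [abs_le] at hdb hdb' ⊢
    constructor <;> linarith [hdb.1, hdb.2, hdb'.1, hdb'.2]
  have e2 : 2 * CE a * H^2 ≤ H * δ / 2 := by
    have : 4 * CE a * H ≤ δ := le_trans (by gcongr) h1
    nlinarith
  have e3 : |H * (v - w)| = H * |v - w| := by rw [abs_mul, abs_of_nonneg hh]
  have e4 : H * |v - w| ≤ |d - d'| + 2 * CE a * H^2 := by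
    rw [← e3]
    have := abs_sub (d - d') ((d - d') - H * (v - w))
    rw [sub_sub_cancel] at this
    linarith
  have e5 : |d - d'| ≤ H * |v - w| + 2 * CE a * H^2 := by
    rw [← e3]
    have := abs_add_le ((d - d') - H * (v - w)) (H * (v - w))
    rw [sub_add_cancel] at this
    linarith
  have e6 : |d - d'| ≤ 1/2 := by
    have : H * |v - w| ≤ H * R := by gcongr
    have : H * (R + δ) ≤ θ * (R + δ) := by gcongr
    nlinarith
  have e7 : H * δ / 2 ≤ |d - d'| := by
    have : H * δ ≤ H * |v - w| := by gcongr
    linarith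
  have e8 : ‖((d - d' : ℝ) : 𝕋)‖ < 2 * η := by
    have : ((d - d' : ℝ) : 𝕋) = (((Zk ha f₀ τ (k + j)).1 p).1 - ((Zk ha f₀ τ (k + j)).1 q).1)
        - (((Zk ha f₀ τ k).1 p).1 - ((Zk ha f₀ τ k).1 q).1) := by
      rw [hd, hd', AddCircle.coe_sub]; abel
    rw [this]
    refine lt_of_le_of_lt (norm_sub_le _ _) ?_
    linarith
  rw [torus_norm_coe_eq e6] at e8
  have : g * δ ≤ H * δ := by gcongr
  linarith

lemma window_finite {a : ℝ} (ha : 2 ≤ a) {f₀ : PM} (hm : Integrable (fun p : 𝕏 => |p.2|) (f₀ : Measure 𝕏))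
    {δ R c θ : ℝ} (hδ : 0 < δ) (hR : 0 < R) (hc : 0 < c) (hθ : 0 < θ)
    (h1 : 4 * CE a * (2 * θ) ≤ δ) (h2 : (2 * θ) * (R + δ) ≤ 1/2) (t₀ : ℝ) :
    {t : ℝ | 0 ≤ t ∧ t₀ ≤ t ∧ t ≤ t₀ + θ ∧ ENNReal.ofReal c < mass2 (fl ha hm t) (badS δ R)}.Finite := by
  by_contra hinf
  obtain ⟨m, hmc⟩ := exists_nat_gt (1 / c)
  obtain ⟨S, hS, hcard⟩ := Set.Infinite.exists_subset_card_eq hinf (m + 2)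
  have hnt : (S : Set ℝ).Nontrivial := by
    rw [← Finset.Nontrivial, ← Finset.one_lt_card_iff_nontrivial, hcard]; omega
  set g := (S : Set ℝ).infsep with hgd
  have hg : 0 < g := (S.finite_toSet.infsep_pos_iff_nontrivial).2 hnt
  set η := g / 2 * δ / 4 with hη
  have hη0 : 0 < η := by positivity
  have ev1 : ∀ᶠ n in (𝒰 : Filter ℕ), ∀ t ∈ S, ENNReal.ofReal c < mass2 (mun ha f₀ n t) (badO η δ R) := by
    rw [Filter.eventually_all_finset]
    intro t ht
    have hmass := (hS ht).2.2.2
    have hcp : Continuous fun μ : PM => μ.prod μ := by fun_prop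
    have hl := (hcp.tendsto (fl ha hm t)).comp (fl_tendsto ha hm t)
    have hp := ProbabilityMeasure.le_liminf_measure_open_of_tendsto hl (badO_open η δ R)
    have h3 : ENNReal.ofReal c < mass2 (fl ha hm t) (badO η δ R) := lt_of_lt_of_le hmass (measure_mono (badS_sub hη0))
    exact Filter.eventually_lt_of_lt_liminf (lt_of_lt_of_le h3 hp)
  have ev2 : ∀ᶠ n in (𝒰 : Filter ℕ), tn n < min (g/2) θ :=
    (tn_tendsto.mono_left u_le).eventually (gt_mem_nhds (by positivity))
  obtain ⟨n, hn1, hn2⟩ := (ev1.and ev2).exists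
  have hτ := tn_pos n
  set A : ℝ → Set (𝕏 × 𝕏) := fun t => (Prod.map (Zk ha f₀ (tn n) (kn n t)).1 (Zk ha f₀ (tn n) (kn n t)).1) ⁻¹' badO η δ R with hA
  have hAm : ∀ t, MeasurableSet (A t) := fun t =>
    ((Zk ha f₀ (tn n) (kn n t)).2.prodMap (Zk ha f₀ (tn n) (kn n t)).2) (badO_open η δ R).measurableSet
  have hAeq : ∀ t, mass2 (mun ha f₀ n t) (badO η δ R) = ((f₀ : Measure 𝕏).prod (f₀ : Measure 𝕏)) (A t) := by
    intro t
    have e : (mun ha f₀ n t : Measure 𝕏) = Measure.map (Zk ha f₀ (tn n) (kn n t)).1 (f₀ : Measure 𝕏) :=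
      rfl
    unfold mass2
    rw [e, Measure.map_prod_map _ _ (Zk ha f₀ (tn n) (kn n t)).2 (Zk ha f₀ (tn n) (kn n t)).2,
      Measure.map_apply ((Zk ha f₀ (tn n) (kn n t)).2.prodMap (Zk ha f₀ (tn n) (kn n t)).2) (badO_open η δ R).measurableSet]
  have hdis : ∀ s ∈ S, ∀ t ∈ S, s < t → Disjoint (A s) (A t) := by
    intro s hs t ht hst
    rw [Set.disjoint_left]
    rintro ⟨p, q⟩ hp hq
    obtain ⟨j, hj⟩ := Nat.exists_eq_add_of_le (kn_mono n hst.le)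
    have hgap : g ≤ t - s := by
      have := Set.infsep_le_dist_of_mem (s := (S : Set ℝ)) ht hs hst.ne'
      rw [Real.dist_eq, abs_of_pos (by linarith)] at this
      exact this
    have hs' := hS hs
    have ht' := hS ht
    have a1 := kn_le n hs'.1
    have a2 := kn_le n ht'.1
    have a3 := kn_gt n s
    have a4 := kn_gt n t
    have hsum : tn n * kn n t = tn n * kn n s + tn n * j := by rw [hj]; push_cast; ring
    have b1 : tn n < g/2 := lt_of_lt_of_le hn2 (min_le_left _ _)
    have b2 : tn n < θ := lt_of_lt_of_le hn2 (min_le_right _ _)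
    have c1 := ht'.2.2.1
    have c2 := hs'.2.1
    have hq' : ((Zk ha f₀ (tn n) (kn n s + j)).1 p, (Zk ha f₀ (tn n) (kn n s + j)).1 q) ∈ badO η δ R := by
      rw [← hj]; exact hq
    exact separate ha f₀ hτ.le (kn n s) j hδ hR h1 h2 (by linarith) (g := g/2) (by linarith) (by rw [hη]; linarith) p q hp hq'
  have hpd : Set.PairwiseDisjoint (S : Set ℝ) A := by
    intro s hs t ht hne
    rcases lt_or_gt_of_ne hne with h | h
    · exact hdis s hs t ht h
    · exact (hdis t ht s hs h).symm
  have hsum := measure_biUnion_finset (μ := (f₀ : Measure 𝕏).prod (f₀ : Measure 𝕏)) hpd (fun t _ => hAm t)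
  have hle : ∑ t ∈ S, ((f₀ : Measure 𝕏).prod (f₀ : Measure 𝕏)) (A t) ≤ 1 := by
    rw [← hsum]; exact prob_le_one
  have hge : ∑ t ∈ S, ENNReal.ofReal c ≤ ∑ t ∈ S, ((f₀ : Measure 𝕏).prod (f₀ : Measure 𝕏)) (A t) :=
    Finset.sum_le_sum fun t ht => by rw [← hAeq]; exact (hn1 t ht).le
  have hfin := hge.trans hle
  rw [Finset.sum_const, hcard, nsmul_eq_mul, ← ENNReal.ofReal_natCast, ← ENNReal.ofReal_mul (by positivity),
    ENNReal.ofReal_le_one] at hfin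
  rw [div_lt_iff₀ hc] at hmc
  push_cast at hfin
  nlinarith

lemma bad_countable {a : ℝ} (ha : 2 ≤ a) {f₀ : PM} (hm : Integrable (fun p : 𝕏 => |p.2|) (f₀ : Measure 𝕏)) :
    {t : ℝ | 0 ≤ t ∧ ¬ Good (fl ha hm t)}.Countable := by
  have hC := CE_nonneg ha
  set Dl : ℕ → ℝ := fun j => 1 / ((j:ℝ) + 1) with hDl
  set Rl : ℕ → ℝ := fun j => (j:ℝ) + 1 with hRl
  have hD0 : ∀ j, 0 < Dl j := fun j => by simp only [hDl]; positivity
  have hR0 : ∀ j, 0 < Rl j := fun j => by simp only [hRl]; positivity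
  have hθ : ∀ j, ∃ θ : ℝ, 0 < θ ∧ 4 * CE a * (2 * θ) ≤ Dl j ∧ (2 * θ) * (Rl j + Dl j) ≤ 1/2 := by
    intro j
    have h1 := hD0 j
    have h2 := hR0 j
    have hp : 0 < 8 * (CE a + 1) := by positivity
    have hq : 0 < 4 * (Rl j + Dl j) := by positivity
    refine ⟨min (Dl j / (8 * (CE a + 1))) (1 / (4 * (Rl j + Dl j))), by positivity, ?_, ?_⟩
    · have := min_le_left (Dl j / (8 * (CE a + 1))) (1 / (4 * (Rl j + Dl j)))
      set x := min (Dl j / (8 * (CE a + 1))) (1 / (4 * (Rl j + Dl j)))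
      have hx : 0 < x := by positivity
      rw [le_div_iff₀ hp] at this
      nlinarith
    · have := min_le_right (Dl j / (8 * (CE a + 1))) (1 / (4 * (Rl j + Dl j)))
      rw [le_div_iff₀ hq] at this
      linarith
  choose θ hθ0 hθ1 hθ2 using hθ
  have hsub : {t : ℝ | 0 ≤ t ∧ ¬ Good (fl ha hm t)} ⊆ ⋃ (j : ℕ) (l : ℕ) (i : ℕ),
      {t : ℝ | 0 ≤ t ∧ θ j * i ≤ t ∧ t ≤ θ j * i + θ j ∧ ENNReal.ofReal (Dl l) < mass2 (fl ha hm t) (badS (Dl j) (Rl j))} := by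
    rintro t ⟨ht, hbad⟩
    have hU : {z : 𝕏 × 𝕏 | z.1.1 = z.2.1 ∧ z.1.2 ≠ z.2.2} ⊆ ⋃ j, badS (Dl j) (Rl j) := by
      rintro z ⟨hz1, hz2⟩
      have hpos : 0 < |z.1.2 - z.2.2| := abs_pos.2 (sub_ne_zero.2 hz2)
      obtain ⟨j1, hj1⟩ := exists_nat_gt (1 / |z.1.2 - z.2.2|)
      obtain ⟨j2, hj2⟩ := exists_nat_gt |z.1.2 - z.2.2|
      rw [Set.mem_iUnion]
      refine ⟨j1 + j2, hz1, ?_, ?_⟩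
      · simp only [hDl]
        rw [div_lt_iff₀ hpos] at hj1
        rw [div_lt_iff₀ (by positivity)]
        push_cast
        have : 0 ≤ |z.1.2 - z.2.2| * ((j2:ℝ) + 1) := by positivity
        nlinarith
      · simp only [hRl]
        push_cast
        have : (0:ℝ) ≤ j1 := Nat.cast_nonneg _
        linarith
    have hex : ∃ j, mass2 (fl ha hm t) (badS (Dl j) (Rl j)) ≠ 0 := by
      by_contra hall
      push Not at hall
      apply hbad
      refine measure_mono_null hU ?_
      rw [measure_iUnion_null_iff]
      exact hall
    obtain ⟨j, hj⟩ := hex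
    obtain ⟨l, hl⟩ : ∃ l, ENNReal.ofReal (Dl l) < mass2 (fl ha hm t) (badS (Dl j) (Rl j)) := by
      have hten : Tendsto (fun l => ENNReal.ofReal (Dl l)) atTop (𝓝 0) := by
        have := ENNReal.tendsto_ofReal tn_tendsto
        rw [ENNReal.ofReal_zero] at this
        exact this
      exact (hten.eventually (gt_mem_nhds (pos_iff_ne_zero.2 hj))).exists
    simp only [Set.mem_iUnion]
    refine ⟨j, l, ⌊t / θ j⌋₊, ht, ?_, ?_, hl⟩
    · have := Nat.floor_le (a := t / θ j) (div_nonneg ht (hθ0 j).le)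
      rw [le_div_iff₀ (hθ0 j)] at this
      linarith
    · have := (Nat.lt_floor_add_one (t / θ j)).le
      rw [div_le_iff₀ (hθ0 j)] at this
      linarith
  refine Set.Countable.mono hsub ?_
  refine Set.countable_iUnion fun j => Set.countable_iUnion fun l => Set.countable_iUnion fun i => ?_
  exact (window_finite ha hm (hD0 j) (hR0 j) (hD0 l) (hθ0 j) (hθ1 j) (hθ2 j) _).countable

theorem vpme_global_weak_existence (ε : ℝ) (hε : ε ∈ Set.Ioc (0:ℝ) 1)
    (f₀ : Measure (𝕋 × ℝ)) [IsProbabilityMeasure f₀]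
    (hmom : Integrable (fun p : 𝕋 × ℝ => |p.2|) f₀) :
    ∃ (f : ℝ → Measure (𝕋 × ℝ)) (U E : ℝ → ℝ → ℝ),
      IsVPMESol ε (Set.Ici 0) f U E ∧ f 0 = f₀ := by
  have hε0 : 0 < ε := hε.1
  have hε2 : 0 < ε ^ 2 := by positivity
  have ha : 2 ≤ 2 / ε ^ 2 := by
    rw [le_div_iff₀ hε2]
    have : ε ^ 2 ≤ 1 := pow_le_one₀ hε0.le hε.2
    linarith
  set a : ℝ := 2 / ε ^ 2 with hadef
  have hεa : ε ^ 2 = 2 / a := by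
    rw [hadef]; field_simp
  let F₀ : PM := ⟨f₀, inferInstance⟩
  have hm : Integrable (fun p : 𝕏 => |p.2|) (F₀ : Measure 𝕏) := hmom
  refine ⟨fun t => (fl ha hm t : Measure 𝕏), fun t x => Uof ha (fl ha hm t) (x : 𝕋), fun t x => Ef ha (fl ha hm t) (x : 𝕋), ?_, ?_⟩
  · have per1 : ∀ x : ℝ, ((x + 1 : ℝ) : 𝕋) = (x : 𝕋) := fun x => by
      rw [AddCircle.coe_add, AddCircle.coe_period, add_zero]
    refine ⟨fun t _ => inferInstance, fun t _ => fl_moment ha hm t, ?_, ?_, fun t _ => Uof_lip ha _, ?_, ?_, ?_, ?_⟩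
    · intro φ
      exact (fl_cont ha hm φ.continuous (C := ‖φ‖) fun p => φ.norm_coe_le_norm p).continuousOn
    · intro t _ x
      simp only [per1]
    · intro t _ x
      simp only [per1]
    · intro t _ ψ hψ hp
      rw [hεa]
      exact poisson_lemma ha _ hψ hp
    · intro t _ x
      have := Ef_def ha (fl ha hm t) (x : 𝕋)
      simpa only [AddCircle.coe_add, AddCircle.coe_sub] using this
    · intro φ hφ
      obtain ⟨K, hK⟩ := F_lip ha hm hφ
      refine ⟨fun t _ => ⟨K, 1, one_pos, hK.mono Set.inter_subset_left⟩, ?_⟩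
      have hnull : volume {t : ℝ | 0 ≤ t ∧ ¬ Good (fl ha hm t)} = 0 := (bad_countable ha hm).measure_zero volume
      have hae : ∀ᵐ t ∂(volume : Measure ℝ), ¬ (0 ≤ t ∧ ¬ Good (fl ha hm t)) := by
        rw [ae_iff]; simpa using hnull
      filter_upwards [hae] with t ht ht0
      have hgood : Good (fl ha hm t) := by
        by_contra h; exact ht ⟨ht0, h⟩
      have := F_deriv ha hm hφ ht0 hgood
      simp only [coe_torusRep]
      exact this
  · change ((fl ha hm 0 : PM) : Measure 𝕏) = f₀
    rw [fl_zero]; rfl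
end
end

section
/- Let ε ∈ (0,1] and let Ū : ℝ → ℝ be a 1-periodic C¹ function with ‖Ū‖_{∞} ≤ 1 and ‖Ū'‖_{∞} ≤ 1. Then there exists a unique 1-periodic C² function Û : ℝ → ℝ satisfying Û'' = e^{(Ū + Û)/ε²} − 1 on ℝ, and this solution satisfies ‖Û‖_{∞} ≤ 3, ‖Û'‖_{∞} ≤ 2, and ‖Û''‖_{∞} ≤ 3/ε². -/
open MeasureTheory Real Filter Topology

noncomputable def PP (k : ℝ) (f : ℝ → ℝ) (x : ℝ) : ℝ :=
  ∫ y in Set.Iic (0:ℝ), Real.exp (k * y) * f (x + y)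

lemma PP_integrable {k : ℝ} (hk : 0 < k) {f : ℝ → ℝ} (hf : Continuous f) {M : ℝ}
    (hM : ∀ x, |f x| ≤ M) (c : ℝ) :
    IntegrableOn (fun y => Real.exp (k * y) * f y) (Set.Iic c) := by
  refine (integrableOn_exp_mul_Iic hk c).mul_bdd (c := M) hf.aestronglyMeasurable ?_
  exact Eventually.of_forall hM

lemma PP_eq (k : ℝ) (f : ℝ → ℝ) (x : ℝ) :
    PP k f x = Real.exp (-(k * x)) * ∫ y in Set.Iic x, Real.exp (k * y) * f y := by
  unfold PP
  rw [← integral_const_mul, ← integral_indicator measurableSet_Iic,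
    ← integral_indicator measurableSet_Iic,
    ← integral_add_left_eq_self (μ := volume)
      ((Set.Iic x).indicator fun y => Real.exp (-(k * x)) * (Real.exp (k * y) * f y)) x]
  congr 1
  ext y
  by_cases h : y ≤ 0
  · rw [Set.indicator_of_mem (by simpa using h), Set.indicator_of_mem (by simpa using h),
      ← mul_assoc, ← Real.exp_add]
    congr 2
    ring
  · rw [Set.indicator_of_notMem (by simpa using h), Set.indicator_of_notMem (by simpa using h)]

lemma PP_hasDerivAt {k : ℝ} (hk : 0 < k) {f : ℝ → ℝ} (hf : Continuous f) {M : ℝ}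
    (hM : ∀ x, |f x| ≤ M) (x : ℝ) : HasDerivAt (PP k f) (f x - k * PP k f x) x := by
  have h1 : PP k f = fun x => Real.exp (-(k * x)) *
      ((∫ y in Set.Iic (0:ℝ), Real.exp (k * y) * f y) +
        ∫ y in (0:ℝ)..x, Real.exp (k * y) * f y) := by
    ext x
    rw [PP_eq, ← intervalIntegral.integral_Iic_sub_Iic (PP_integrable hk hf hM 0)
      (PP_integrable hk hf hM x)]
    ring
  have hc : Continuous (fun y => Real.exp (k * y) * f y) := by fun_prop
  have h2 := (hc.integral_hasStrictDerivAt 0 x).hasDerivAt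
  have h3 : HasDerivAt (fun x => Real.exp (-(k * x))) (Real.exp (-(k * x)) * (-(k * 1))) x :=
    (((hasDerivAt_id x).const_mul k).neg).exp
  have h4 := h3.mul (h2.const_add (∫ y in Set.Iic (0:ℝ), Real.exp (k * y) * f y))
  rw [h1]
  refine h4.congr_deriv ?_
  have : Real.exp (-(k * x)) * Real.exp (k * x) = 1 := by
    rw [← Real.exp_add]; simp
  linear_combination (f x) * this

lemma PP_bound {k : ℝ} (hk : 0 < k) {f : ℝ → ℝ} {M : ℝ}
    (hM : ∀ x, |f x| ≤ M) (x : ℝ) : |PP k f x| ≤ M / k := by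
  have h := integral_exp_mul_Iic hk 0
  have h2 : ‖PP k f x‖ ≤ ∫ y in Set.Iic (0:ℝ), Real.exp (k * y) * M := by
    apply norm_integral_le_of_norm_le
    · exact (integrableOn_exp_mul_Iic hk 0).mul_const M
    · refine Eventually.of_forall fun y => ?_
      rw [norm_mul, Real.norm_eq_abs, abs_of_pos (Real.exp_pos _)]
      exact mul_le_mul_of_nonneg_left (hM _) (Real.exp_pos _).le
  rw [integral_mul_const, h] at h2
  simpa [div_eq_inv_mul] using h2

lemma PP_sub {k : ℝ} (hk : 0 < k) {f g : ℝ → ℝ} (hf : Continuous f) (hg : Continuous g) {M N : ℝ}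
    (hM : ∀ x, |f x| ≤ M) (hN : ∀ x, |g x| ≤ N) (x : ℝ) :
    PP k f x - PP k g x = PP k (fun y => f y - g y) x := by
  rw [PP_eq, PP_eq, PP_eq, ← mul_sub, ← integral_sub (PP_integrable hk hf hM x)
    (PP_integrable hk hg hN x)]
  simp only [mul_sub]

/-- The Green operator of `k ^ 2 - d²/dx²`. -/
noncomputable def GG (k : ℝ) (f : ℝ → ℝ) (x : ℝ) : ℝ :=
  (PP k f x + PP k (fun y => f (-y)) (-x)) / (2 * k)

noncomputable def DG (k : ℝ) (f : ℝ → ℝ) (x : ℝ) : ℝ :=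
  (PP k (fun y => f (-y)) (-x) - PP k f x) / 2

lemma QQ_hasDerivAt {k : ℝ} (hk : 0 < k) {f : ℝ → ℝ} (hf : Continuous f) {M : ℝ}
    (hM : ∀ x, |f x| ≤ M) (x : ℝ) : HasDerivAt (fun x => PP k (fun y => f (-y)) (-x))
    (k * PP k (fun y => f (-y)) (-x) - f x) x := by
  have h := PP_hasDerivAt hk (f := fun y => f (-y)) (by fun_prop) (M := M) (fun x => hM _) (-x)
  have h2 := h.comp x (hasDerivAt_neg x)
  refine h2.congr_deriv ?_
  simp

lemma GG_hasDerivAt {k : ℝ} (hk : 0 < k) {f : ℝ → ℝ} (hf : Continuous f) {M : ℝ}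
    (hM : ∀ x, |f x| ≤ M) (x : ℝ) : HasDerivAt (GG k f) (DG k f x) x := by
  have h := ((PP_hasDerivAt hk hf hM x).add (QQ_hasDerivAt hk hf hM x)).div_const (2 * k)
  refine h.congr_deriv ?_
  unfold DG
  field_simp
  ring

lemma DG_hasDerivAt {k : ℝ} (hk : 0 < k) {f : ℝ → ℝ} (hf : Continuous f) {M : ℝ}
    (hM : ∀ x, |f x| ≤ M) (x : ℝ) : HasDerivAt (DG k f) (k ^ 2 * GG k f x - f x) x := by
  have h := ((QQ_hasDerivAt hk hf hM x).sub (PP_hasDerivAt hk hf hM x)).div_const 2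
  refine h.congr_deriv ?_
  unfold GG
  field_simp
  ring

lemma GG_bound {k : ℝ} (hk : 0 < k) {f : ℝ → ℝ} {M : ℝ}
    (hM : ∀ x, |f x| ≤ M) (x : ℝ) : |GG k f x| ≤ M / k ^ 2 := by
  unfold GG
  have h1 := PP_bound hk hM x
  have h2 := PP_bound (f := fun y => f (-y)) hk (M := M) (fun x => hM _) (-x)
  rw [abs_div, abs_of_pos (show 0 < 2 * k by positivity), div_le_iff₀ (by positivity)]
  calc _ ≤ _ := abs_add_le _ _
    _ ≤ M / k + M / k := add_le_add h1 h2
    _ = _ := by field_simp; ring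

lemma GG_sub {k : ℝ} (hk : 0 < k) {f g : ℝ → ℝ} (hf : Continuous f) (hg : Continuous g)
    {M N : ℝ} (hM : ∀ x, |f x| ≤ M) (hN : ∀ x, |g x| ≤ N) (x : ℝ) : GG k f x - GG k g x = GG k (fun y => f y - g y) x := by
  unfold GG
  rw [← PP_sub hk hf hg hM hN, ← PP_sub (f := fun y => f (-y)) (g := fun y => g (-y)) hk
    (by fun_prop) (by fun_prop) (M := M) (N := N) (fun x => hM _) (fun x => hN _)]
  ring

lemma GG_shift (k : ℝ) (f : ℝ → ℝ) (c x : ℝ) : GG k f (x + c) = GG k (fun y => f (y + c)) x := by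
  unfold GG PP
  congr 2
  · congr 1; ext y; congr 2; ring
  · congr 1; ext y; congr 2; ring

lemma exp_diff_bounds {a ε s t : ℝ} (hε : 0 < ε) (ha : |a| ≤ 1) (hs : -1 ≤ s) (hst : s ≤ t)
    (ht : t ≤ 1) :
    Real.exp (-2 / ε ^ 2) / ε ^ 2 * (t - s) ≤
      Real.exp ((a + t) / ε ^ 2) - Real.exp ((a + s) / ε ^ 2) ∧
    Real.exp ((a + t) / ε ^ 2) - Real.exp ((a + s) / ε ^ 2) ≤
      Real.exp (2 / ε ^ 2) / ε ^ 2 * (t - s) := by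
  obtain ⟨ha1, ha2⟩ := abs_le.1 ha
  have he : 0 < ε ^ 2 := by positivity
  have key : ∀ p q : ℝ, Real.exp p * (q - p) ≤ Real.exp q - Real.exp p := by
    intro p q
    have h1 := Real.add_one_le_exp (q - p)
    have h2 : Real.exp q = Real.exp p * Real.exp (q - p) := by rw [← Real.exp_add]; simp
    rw [h2]
    nlinarith [Real.exp_pos p]
  have h1 := key ((a + s) / ε ^ 2) ((a + t) / ε ^ 2)
  have h2 := key ((a + t) / ε ^ 2) ((a + s) / ε ^ 2)
  have e1 : (a + t) / ε ^ 2 - (a + s) / ε ^ 2 = (t - s) / ε ^ 2 := by ring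
  have e2 : (a + s) / ε ^ 2 - (a + t) / ε ^ 2 = -((t - s) / ε ^ 2) := by ring
  rw [e1] at h1
  rw [e2] at h2
  have hd : 0 ≤ (t - s) / ε ^ 2 := div_nonneg (by linarith) he.le
  have h3 : Real.exp (-2 / ε ^ 2) ≤ Real.exp ((a + s) / ε ^ 2) := by
    apply Real.exp_le_exp.2; gcongr; linarith
  have h4 : Real.exp ((a + t) / ε ^ 2) ≤ Real.exp (2 / ε ^ 2) := by
    apply Real.exp_le_exp.2; gcongr; linarith
  have h5 := mul_le_mul_of_nonneg_right h3 hd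
  have h6 := mul_le_mul_of_nonneg_right h4 hd
  have e3 : ∀ z : ℝ, z / ε ^ 2 * (t - s) = z * ((t - s) / ε ^ 2) := fun z => by ring
  rw [e3, e3]
  constructor <;> linarith

/-- clamp to `[-1,1]` -/
noncomputable def cl (u : ℝ) : ℝ := max (-1) (min u 1)

lemma cl_mem (u : ℝ) : -1 ≤ cl u ∧ cl u ≤ 1 := by
  unfold cl; constructor
  · exact le_max_left _ _
  · exact max_le (by norm_num) (min_le_right _ _)

lemma cl_lip (u v : ℝ) (h : u ≤ v) : cl u ≤ cl v ∧ cl v - cl u ≤ v - u := by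
  unfold cl; constructor
  · gcongr
  · grind

lemma cl_eq {u : ℝ} (h : |u| ≤ 1) : cl u = u := by
  obtain ⟨h1, h2⟩ := abs_le.1 h
  unfold cl
  rw [min_eq_left h2, max_eq_right h1]

/-- truncated nonlinearity -/
noncomputable def NN (ε a u : ℝ) : ℝ :=
  Real.exp (2 / ε ^ 2) / ε ^ 2 * cl u - (Real.exp ((a + cl u) / ε ^ 2) - 1)

lemma NN_bound {ε a : ℝ} (hε : 0 < ε) (ha : |a| ≤ 1) (u : ℝ) :
    |NN ε a u| ≤ Real.exp (2 / ε ^ 2) / ε ^ 2 := by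
  obtain ⟨ha1, ha2⟩ := abs_le.1 ha
  obtain ⟨h1, h2⟩ := cl_mem u
  have A := (exp_diff_bounds hε ha h1 h2 le_rfl).2
  have B := (exp_diff_bounds hε ha le_rfl h1 h2).2
  have he : 0 < ε ^ 2 := by positivity
  have C : 1 ≤ Real.exp ((a + 1) / ε ^ 2) := Real.one_le_exp (div_nonneg (by linarith) he.le)
  have D : Real.exp ((a + -1) / ε ^ 2) ≤ 1 :=
    Real.exp_le_one_iff.2 (div_nonpos_of_nonpos_of_nonneg (by linarith) he.le)
  unfold NN
  rw [abs_le]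
  constructor <;> linarith

lemma NN_lip {ε a : ℝ} (hε : 0 < ε) (ha : |a| ≤ 1) (u v : ℝ) :
    |NN ε a u - NN ε a v| ≤
      (Real.exp (2 / ε ^ 2) / ε ^ 2 - Real.exp (-2 / ε ^ 2) / ε ^ 2) * |u - v| := by
  wlog h : v ≤ u generalizing u v
  · rw [abs_sub_comm, abs_sub_comm u]; exact this v u (le_of_not_ge h)
  obtain ⟨h1, h2⟩ := cl_lip v u h
  have A := exp_diff_bounds hε ha (cl_mem v).1 h1 (cl_mem u).2
  have hm : Real.exp (-2 / ε ^ 2) / ε ^ 2 ≤ Real.exp (2 / ε ^ 2) / ε ^ 2 := by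
    gcongr; norm_num
  have B := mul_le_mul_of_nonneg_left h2 (sub_nonneg.2 hm)
  rw [abs_of_nonneg (sub_nonneg.2 h), abs_of_nonneg]
  · unfold NN; linarith [A.1]
  · unfold NN; linarith [A.2]

lemma exists_sol (ε : ℝ) (hε : 0 < ε) (Ub : ℝ → ℝ) (hper : Function.Periodic Ub 1)
    (hC : Continuous Ub) (hU : ∀ x, |Ub x| ≤ 1) :
    ∃ u : ℝ → ℝ, Function.Periodic u 1 ∧ ContDiff ℝ 2 u ∧ (∀ x, |u x| ≤ 1) ∧
      ∀ x, deriv (deriv u) x = Real.exp ((Ub x + u x) / ε ^ 2) - 1 := by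
  set L := Real.exp (2 / ε ^ 2) / ε ^ 2 with hL
  set m := Real.exp (-2 / ε ^ 2) / ε ^ 2 with hm
  have hL0 : 0 < L := by positivity
  have hm0 : 0 < m := by positivity
  have hmL : m ≤ L := by rw [hL, hm]; gcongr; norm_num
  obtain ⟨k, hk, hkL⟩ : ∃ k : ℝ, 0 < k ∧ k ^ 2 = L :=
    ⟨√L, Real.sqrt_pos.2 hL0, Real.sq_sqrt hL0.le⟩
  let R : (ℝ → ℝ) → ℝ → ℝ := fun u x => NN ε (Ub x) (u x)
  have hRc : ∀ u : ℝ → ℝ, Continuous u → Continuous (R u) := by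
    intro u hu
    simp only [R]
    unfold NN cl
    fun_prop
  have hRb : ∀ (u : ℝ → ℝ) x, |R u x| ≤ L := fun u x => NN_bound hε (hU x) _
  have hGb : ∀ (u : ℝ → ℝ) x, |GG k (R u) x| ≤ 1 := by
    intro u x
    have := GG_bound hk (hRb u) x
    rwa [hkL, div_self hL0.ne'] at this
  have hGc : ∀ u : ℝ → ℝ, Continuous u → Continuous (GG k (R u)) := fun u hu =>
    continuous_iff_continuousAt.2 fun x => (GG_hasDerivAt hk (hRc u hu) (hRb u) x).continuousAt
  let T : BoundedContinuousFunction ℝ ℝ → BoundedContinuousFunction ℝ ℝ := fun u =>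
    BoundedContinuousFunction.ofNormedAddCommGroup (GG k (R u)) (hGc u u.continuous) 1 (hGb u)
  have hT : ContractingWith ⟨(L - m) / L, div_nonneg (by linarith) hL0.le⟩ T := by
    constructor
    · change (L - m) / L < 1
      rw [div_lt_one hL0]; linarith
    · refine LipschitzWith.of_dist_le_mul fun u v => ?_
      have h0 : 0 ≤ (L - m) / L := div_nonneg (by linarith) hL0.le
      change dist (T u) (T v) ≤ (L - m) / L * dist u v
      rw [BoundedContinuousFunction.dist_le (mul_nonneg h0 dist_nonneg)]
      intro x
      change |GG k (R u) x - GG k (R v) x| ≤ _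
      rw [GG_sub hk (hRc u u.continuous) (hRc v v.continuous) (hRb u) (hRb v)]
      have : ∀ y, |R u y - R v y| ≤ (L - m) * dist u v := by
        intro y
        refine (NN_lip hε (hU y) _ _).trans ?_
        exact mul_le_mul_of_nonneg_left (by
          rw [← Real.dist_eq]
          exact BoundedContinuousFunction.dist_coe_le_dist y)
          (by linarith)
      have := GG_bound hk this x
      rw [hkL] at this
      refine this.trans (le_of_eq ?_)
      ring
  obtain ⟨u, hu⟩ : ∃ u, T u = u := ⟨_, hT.fixedPoint_isFixedPt⟩
  have hux : ∀ x, GG k (R u) x = u x := fun x => DFunLike.congr_fun hu x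
  have hu1 : ∀ x, |u x| ≤ 1 := fun x => by rw [← hux]; exact hGb u x
  have hR := hRc u u.continuous
  have hd0 : ∀ x, HasDerivAt u (DG k (R u) x) x := by
    intro x
    have := GG_hasDerivAt hk hR (hRb u) x
    exact this.congr_of_eventuallyEq (Eventually.of_forall fun y => (hux y).symm)
  have hd1 : deriv u = DG k (R u) := funext fun x => (hd0 x).deriv
  have hD : ∀ x, HasDerivAt (DG k (R u)) (L * u x - R u x) x := by
    intro x
    have := DG_hasDerivAt hk hR (hRb u) x
    rwa [hkL, hux] at this
  have hd2 : deriv (deriv u) = fun x => L * u x - R u x := by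
    ext x; rw [hd1]; exact (hD x).deriv
  refine ⟨u, ?_, ?_, hu1, ?_⟩
  · let v : BoundedContinuousFunction ℝ ℝ :=
      u.compContinuous ⟨fun x => x + 1, by fun_prop⟩
    have hv : T v = v := by
      ext x
      change GG k (R v) x = u (x + 1)
      rw [← hux, GG_shift]
      congr 1
      ext y
      change NN ε (Ub y) (u (y + 1)) = NN ε (Ub (y + 1)) (u (y + 1))
      rw [hper]
    have := hT.fixedPoint_unique' hv hu
    intro x
    exact DFunLike.congr_fun this x
  · rw [show (2 : WithTop ℕ∞) = 1 + 1 by norm_num, contDiff_succ_iff_deriv]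
    refine ⟨fun x => (hd0 x).differentiableAt, by simp, ?_⟩
    rw [contDiff_one_iff_deriv]
    refine ⟨fun x => ?_, ?_⟩
    · rw [hd1]; exact (hD x).differentiableAt
    · rw [hd2]; exact (u.continuous.const_mul L).sub hR
  · intro x
    rw [hd2]
    change L * u x - NN ε (Ub x) (u x) = _
    unfold NN
    rw [cl_eq (hu1 x)]
    ring

lemma second_deriv_max {w : ℝ → ℝ} (hw : ContDiff ℝ 2 w) {x₀ : ℝ} (h : ∀ x, w x ≤ w x₀) :
    deriv (deriv w) x₀ ≤ 0 := by
  by_contra! hp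
  have hmax : IsLocalMax w x₀ := Eventually.of_forall h
  have hmin := isLocalMin_of_deriv_deriv_pos hp hmax.deriv_eq_zero hw.continuous.continuousAt
  have he : w =ᶠ[𝓝 x₀] fun _ => w x₀ := by
    filter_upwards [hmin] with x hx
    exact le_antisymm (h x) hx
  have : deriv (deriv w) x₀ = 0 := by
    rw [he.deriv.deriv_eq]; simp
  linarith

lemma periodic_max {w : ℝ → ℝ} (hw : Continuous w) (hp : Function.Periodic w 1) :
    ∃ x₀, ∀ x, w x ≤ w x₀ := by
  obtain ⟨x₀, -, h⟩ := isCompact_Icc.exists_isMaxOn (Set.nonempty_Icc.2 (zero_le_one' ℝ))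
    hw.continuousOn
  refine ⟨x₀, fun x => ?_⟩
  obtain ⟨y, hy, hxy⟩ := hp.exists_mem_Ico₀ one_pos x
  rw [hxy]
  exact h (Set.Ico_subset_Icc_self hy)

lemma sol_le {ε : ℝ} (hε : 0 < ε) {Ub u v : ℝ → ℝ}
    (hu : Function.Periodic u 1) (hv : Function.Periodic v 1)
    (hu2 : ContDiff ℝ 2 u) (hv2 : ContDiff ℝ 2 v)
    (eu : ∀ x, deriv (deriv u) x = Real.exp ((Ub x + u x) / ε ^ 2) - 1)
    (ev : ∀ x, deriv (deriv v) x = Real.exp ((Ub x + v x) / ε ^ 2) - 1) (x : ℝ) :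
    u x ≤ v x := by
  obtain ⟨x₀, h0⟩ := periodic_max (w := fun x => u x - v x)
    (hu2.continuous.sub hv2.continuous) (hu.sub hv)
  have h := second_deriv_max (w := fun x => u x - v x) (hu2.sub hv2) h0
  have e1 : deriv (fun x => u x - v x) = fun x => deriv u x - deriv v x := by
    ext y
    exact deriv_fun_sub (hu2.differentiable (by norm_num) y) (hv2.differentiable (by norm_num) y)
  have du : ContDiff ℝ 1 (deriv u) := (contDiff_succ_iff_deriv (n := 1).1 hu2).2.2
  have dv : ContDiff ℝ 1 (deriv v) := (contDiff_succ_iff_deriv (n := 1).1 hv2).2.2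
  rw [e1, deriv_fun_sub (du.differentiable (by norm_num) _) (dv.differentiable (by norm_num) _),
    eu, ev] at h
  have h2 : Real.exp ((Ub x₀ + u x₀) / ε ^ 2) ≤ Real.exp ((Ub x₀ + v x₀) / ε ^ 2) := by linarith
  rw [Real.exp_le_exp, div_le_div_iff_of_pos_right (by positivity)] at h2
  have := h0 x
  linarith

theorem hatU_exists_unique (ε : ℝ) (hε : ε ∈ Set.Ioc (0:ℝ) 1)
    (Ub : ℝ → ℝ) (hper : Function.Periodic Ub 1) (hC1 : ContDiff ℝ 1 Ub)
    (hU : ∀ x, |Ub x| ≤ 1) (hU' : ∀ x, |deriv Ub x| ≤ 1) :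
    ∃ Uh : ℝ → ℝ,
      (Function.Periodic Uh 1 ∧ ContDiff ℝ 2 Uh ∧
        (∀ x, deriv (deriv Uh) x = Real.exp ((Ub x + Uh x)/ε^2) - 1) ∧
        (∀ x, |Uh x| ≤ 3) ∧ (∀ x, |deriv Uh x| ≤ 2) ∧
        (∀ x, |deriv (deriv Uh) x| ≤ 3/ε^2)) ∧
      ∀ Uh' : ℝ → ℝ, Function.Periodic Uh' 1 → ContDiff ℝ 2 Uh' →
        (∀ x, deriv (deriv Uh') x = Real.exp ((Ub x + Uh' x)/ε^2) - 1) →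
        Uh' = Uh := by
  obtain ⟨hε0, hε1⟩ := hε
  obtain ⟨u, up, u2, ub, ue⟩ := exists_sol ε hε0 Ub hper hC1.continuous hU
  have he : 0 < ε ^ 2 := by positivity
  have he1 : ε ^ 2 ≤ 1 := by nlinarith
  have du : ContDiff ℝ 1 (deriv u) := (contDiff_succ_iff_deriv (n := 1).1 u2).2.2
  have dper : Function.Periodic (deriv u) 1 := by
    intro x
    rw [← deriv_comp_add_const]
    congr 1
    ext y
    exact up y
  have hd1 : ∀ x, HasDerivAt u (deriv u x) x := fun x =>
    (u2.differentiable (by norm_num) x).hasDerivAt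
  have hd2 : ∀ x, HasDerivAt (fun y => deriv u y + y) (Real.exp ((Ub x + u x)/ε^2)) x := by
    intro x
    have h := ((du.differentiable (by norm_num) x).hasDerivAt).add (hasDerivAt_id x)
    rw [ue] at h
    exact h.congr_deriv (by ring)
  have hmono : Monotone (fun y => deriv u y + y) := by
    refine monotone_of_deriv_nonneg (fun x => (hd2 x).differentiableAt) fun x => ?_
    rw [(hd2 x).deriv]; positivity
  have hgrad : ∀ x, |deriv u x| ≤ 1 := by
    obtain ⟨x₀, h0⟩ := periodic_max u2.continuous up
    have hz : deriv u x₀ = 0 := IsLocalMax.deriv_eq_zero (Eventually.of_forall h0)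
    have hz1 : deriv u (x₀ + 1) = 0 := by rw [dper, hz]
    intro x
    obtain ⟨y, hy, hxy⟩ := dper.exists_mem_Ico one_pos x x₀
    rw [hxy]
    have a1 := hmono hy.1
    have a2 := hmono hy.2.le
    simp only at a1 a2
    rw [abs_le]
    constructor <;> linarith [hy.1, hy.2]
  have hVd : ∀ x, HasDerivAt (fun y => Ub y + u y + 2 * y) (deriv Ub x + deriv u x + 2 * 1) x :=
    fun x => (((hC1.differentiable (by norm_num) x).hasDerivAt).add (hd1 x)).add
      ((hasDerivAt_id x).const_mul 2)
  have hVmono : Monotone (fun y => Ub y + u y + 2 * y) := by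
    refine monotone_of_deriv_nonneg (fun x => (hVd x).differentiableAt) fun x => ?_
    rw [(hVd x).deriv]
    linarith [(abs_le.1 (hU' x)).1, (abs_le.1 (hgrad x)).1]
  have hE : ∀ x, Real.exp ((Ub x + u x)/ε^2) ≤ 3 / ε ^ 2 := by
    intro x
    set E := Real.exp ((Ub x + u x)/ε^2) with hEdef
    have hE0 : 0 < E := Real.exp_pos _
    have hH : ∀ y, HasDerivAt (fun y => (deriv u y + y) +
        E * (ε ^ 2 / 2) * Real.exp (-(2 / ε ^ 2) * (y - x)))
        (Real.exp ((Ub y + u y)/ε^2) +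
          E * (ε ^ 2 / 2) * (Real.exp (-(2 / ε ^ 2) * (y - x)) * (-(2 / ε ^ 2) * 1))) y := by
      intro y
      exact (hd2 y).add (((((hasDerivAt_id y).sub_const x).const_mul _).exp).const_mul _)
    have hHm : MonotoneOn (fun y => (deriv u y + y) +
        E * (ε ^ 2 / 2) * Real.exp (-(2 / ε ^ 2) * (y - x))) (Set.Icc x (x + 1)) := by
      refine monotoneOn_of_deriv_nonneg (convex_Icc _ _)
        (fun y _ => (hH y).continuousAt.continuousWithinAt)
        (fun y _ => (hH y).differentiableAt.differentiableWithinAt) fun y hy => ?_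
      rw [interior_Icc] at hy
      rw [(hH y).deriv]
      have h1 := hVmono hy.1.le
      simp only at h1
      have h2 : E * Real.exp (-(2 / ε ^ 2) * (y - x)) ≤ Real.exp ((Ub y + u y)/ε^2) := by
        rw [hEdef, ← Real.exp_add, Real.exp_le_exp]
        have : (Ub x + u x)/ε^2 + -(2 / ε ^ 2) * (y - x) =
          (Ub x + u x - 2 * (y - x)) / ε ^ 2 := by ring
        rw [this]
        gcongr
        linarith
      have h3 : E * (ε ^ 2 / 2) * (Real.exp (-(2 / ε ^ 2) * (y - x)) * (-(2 / ε ^ 2) * 1)) =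
          -(E * Real.exp (-(2 / ε ^ 2) * (y - x))) := by
        field_simp
      rw [h3]; linarith
    have h := hHm (Set.left_mem_Icc.2 (by linarith)) (Set.right_mem_Icc.2 (by linarith))
      (by linarith : x ≤ x + 1)
    simp only [sub_self, mul_zero, Real.exp_zero, add_sub_cancel_left, mul_one] at h
    rw [dper] at h
    have h3 : Real.exp (-(2 / ε ^ 2)) ≤ 1 / 3 := by
      rw [Real.exp_neg, ← one_div]
      apply one_div_le_one_div_of_le (by norm_num)
      have h4 := Real.add_one_le_exp (2 / ε ^ 2)
      have h5 : 2 ≤ 2 / ε ^ 2 := by rw [le_div_iff₀ he]; linarith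
      linarith
    have h4 : 0 ≤ E * (ε ^ 2 / 2) := by positivity
    have h5 := mul_le_mul_of_nonneg_left h3 h4
    rw [le_div_iff₀ he]
    linarith
  refine ⟨u, ⟨up, u2, ue, fun x => (ub x).trans (by norm_num),
    fun x => (hgrad x).trans (by norm_num), fun x => ?_⟩, ?_⟩
  · rw [ue, abs_le]
    have h1 := hE x
    have h2 := Real.exp_pos ((Ub x + u x)/ε^2)
    have h3 : 3 ≤ 3 / ε ^ 2 := by rw [le_div_iff₀ he]; linarith
    constructor <;> linarith
  · intro v vp v2 ve
    ext x
    exact le_antisymm (sol_le hε0 vp up v2 u2 ve ue x) (sol_le hε0 up vp u2 v2 ue ve x)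
end
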